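/- arXiv:1602.06817 — 4 statements merged into one kernel-verified Lean document; each statement's English description precedes it below -/
import Mathlib

section
/- Let G be a bull-free graph and let C be an induced 5-cycle in G. If z is a vertex with no neighbor on C and z is adjacent to a vertex x outside C that has exactly k neighbors on C with k ≥ 1, then k ∈ {1, 2, 5}. -/
open SimpleGraph

variable {V : Type*}

/-- The vertices `a b c d e` induce a bull in `G` (edges ab, bc, cd, be, ce). -/
def IsBull (G : SimpleGraph V) (a b c d e : V) : Prop :=
  a ≠ b ∧ a ≠ c ∧ a ≠ d ∧ a ≠ e ∧ b ≠ c ∧ b ≠ d ∧ b ≠ e ∧ c ≠ d ∧ c ≠ e ∧ d ≠ e ∧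
  G.Adj a b ∧ G.Adj b c ∧ G.Adj c d ∧ G.Adj b e ∧ G.Adj c e ∧
  ¬ G.Adj a c ∧ ¬ G.Adj a d ∧ ¬ G.Adj a e ∧ ¬ G.Adj b d ∧ ¬ G.Adj d e

/-- `G` contains no induced bull. -/
def BullFree (G : SimpleGraph V) : Prop := ∀ a b c d e : V, ¬ IsBull G a b c d e

/-- `G` contains no induced path on six vertices. -/
def P6Free (G : SimpleGraph V) : Prop :=
  ¬ ∃ p : Fin 6 → V, Function.Injective p ∧
      ∀ i j : Fin 6, G.Adj (p i) (p j) ↔ (i.val + 1 = j.val ∨ j.val + 1 = i.val)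

/-- `c` lists the vertices of an induced 5-cycle in `G` (indices mod 5). -/
def IsInducedC5 (G : SimpleGraph V) (c : Fin 5 → V) : Prop :=
  Function.Injective c ∧ ∀ i j : Fin 5, G.Adj (c i) (c j) ↔ (j = i + 1 ∨ i = j + 1)

/-- `S` is a homogeneous set in `G`. -/
def IsHomogeneous (G : SimpleGraph V) (S : Set V) : Prop :=
  ∀ v ∉ S, (∀ s ∈ S, G.Adj v s) ∨ (∀ s ∈ S, ¬ G.Adj v s)

/-- `S` is a proper homogeneous set: homogeneous, of size at least two, not all of `V`. -/
def IsProperHomogeneous (G : SimpleGraph V) (S : Set V) : Prop :=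
  IsHomogeneous G S ∧ (∃ a ∈ S, ∃ b ∈ S, a ≠ b) ∧ S ≠ Set.univ

/-- A graph is prime if it has no proper homogeneous set. -/
def IsPrimeGraph (G : SimpleGraph V) : Prop := ¬ ∃ S : Set V, IsProperHomogeneous G S

/-- Number of neighbors of `x` on the 5-cycle `c`. -/
def nbrCount (G : SimpleGraph V) [DecidableRel G.Adj] (c : Fin 5 → V) (x : V) : ℕ :=
  (Finset.univ.filter fun i : Fin 5 => G.Adj x (c i)).card

theorem stmt4 (G : SimpleGraph V) [DecidableRel G.Adj] (hB : BullFree G)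
    (c : Fin 5 → V) (hc : IsInducedC5 G c)
    (z : V) (hz : z ∉ Set.range c) (hz0 : ∀ i : Fin 5, ¬ G.Adj z (c i))
    (x : V) (hx : x ∉ Set.range c) (hzx : G.Adj z x)
    (k : ℕ) (hk : nbrCount G c x = k) (hk1 : 1 ≤ k) :
    k = 1 ∨ k = 2 ∨ k = 5 := by
  have hzc : ∀ i, z ≠ c i := fun i h => hz ⟨i, h.symm⟩
  have hxc : ∀ i, x ≠ c i := fun i h => hx ⟨i, h.symm⟩
  obtain ⟨hinj, hadj⟩ := hc
  -- two consecutive neighbors of `x` force the preceding one, else there is a bull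
  have key : ∀ i j l : Fin 5, j = i + 1 → l = j + 1 →
      G.Adj x (c j) → G.Adj x (c l) → G.Adj x (c i) := by
    intro i j l hj hl h1 h2
    by_contra h3
    subst hj
    subst hl
    refine hB z x (c (i + 1)) (c i) (c (i + 1 + 1)) ⟨hzx.ne, hzc _, hzc _, hzc _, hxc _, hxc _,
      hxc _, hinj.ne ?_, hinj.ne ?_, hinj.ne ?_, hzx, h1, (hadj _ _).2 (Or.inr rfl), h2,
      (hadj _ _).2 (Or.inl rfl), hz0 _, hz0 _, hz0 _, h3, fun h => ?_⟩
    · clear h1 h2 h3; revert i; decide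
    · clear h1 h2 h3; revert i; decide
    · clear h1 h2 h3; revert i; decide
    · have := (hadj _ _).1 h
      clear h h1 h2 h3
      revert i; decide
  have k0 := key 0 1 2 rfl rfl
  have k1 := key 1 2 3 rfl rfl
  have k2 := key 2 3 4 rfl rfl
  have k3 := key 3 4 0 rfl rfl
  have k4 := key 4 0 1 rfl rfl
  have hsum : nbrCount G c x = ∑ i : Fin 5, if G.Adj x (c i) then 1 else 0 := by
    simp [nbrCount]
  rw [hsum, Fin.sum_univ_five] at hk
  by_cases a0 : G.Adj x (c 0) <;> by_cases a1 : G.Adj x (c 1) <;>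
    by_cases a2 : G.Adj x (c 2) <;> by_cases a3 : G.Adj x (c 3) <;>
    by_cases a4 : G.Adj x (c 4) <;> simp_all <;> omega
end

section
/- Let G be a prime graph containing no induced P6 and no induced bull, and let C be an induced 5-cycle in G. If a vertex with no neighbor on C is adjacent to a vertex outside C having exactly k ≥ 1 neighbors on C, then k = 2. -/
open SimpleGraph

variable {V : Type*}

/-- Distinctness of the vertices of a bull is automatic. -/
lemma no_bull {G : SimpleGraph V} (hB : BullFree G) (a b c d e : V)
    (h1 : G.Adj a b) (h2 : G.Adj b c) (h3 : G.Adj c d) (h4 : G.Adj b e) (h5 : G.Adj c e)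
    (n1 : ¬ G.Adj a c) (n2 : ¬ G.Adj a d) (n3 : ¬ G.Adj a e) (n4 : ¬ G.Adj b d)
    (n5 : ¬ G.Adj d e) : False := by
  refine hB a b c d e ⟨h1.ne, ?_, ?_, ?_, h2.ne, ?_, h4.ne, h3.ne, h5.ne, ?_,
    h1, h2, h3, h4, h5, n1, n2, n3, n4, n5⟩
  · rintro rfl; exact n2 h3
  · rintro rfl; exact n4 h1.symm
  · rintro rfl; exact n1 h5.symm
  · rintro rfl; exact n2 h1
  · rintro rfl; exact n4 h4

lemma bull_compl {G : SimpleGraph V} (hB : BullFree G) : BullFree Gᶜ := by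
  rintro a b c d e ⟨h1, h2, h3, h4, h5, h6, h7, h8, h9, h10,
    a1, a2, a3, a4, a5, n1, n2, n3, n4, n5⟩
  simp only [compl_adj, not_and, not_not] at *
  exact no_bull hB b d a c e (n4 h6) (n2 h3).symm (n1 h2) (n5 h10) (n3 h4)
    (fun h => a1.2 h.symm) a2.2 a4.2 (fun h => a3.2 h.symm) a5.2

lemma hom_compl {G : SimpleGraph V} {S : Set V} (h : IsProperHomogeneous Gᶜ S) :
    IsProperHomogeneous G S := by
  refine ⟨fun v hv => ?_, h.2⟩
  have hne : ∀ s ∈ S, v ≠ s := fun s hs e => hv (e ▸ hs)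
  rcases h.1 v hv with h1 | h1
  · exact Or.inr fun s hs => ((compl_adj _ _ _).1 (h1 s hs)).2
  · refine Or.inl fun s hs => ?_
    have := h1 s hs
    simp only [compl_adj, not_and, not_not] at this
    exact this (hne s hs)

lemma c5_compl {G : SimpleGraph V} {c : Fin 5 → V} (hc : IsInducedC5 G c) :
    IsInducedC5 Gᶜ (fun i => c (2 * i)) := by
  refine ⟨fun i j h => ?_, fun i j => ?_⟩
  · have := hc.1 h
    revert this; clear * -; decide +revert
  · have key : ∀ i j : Fin 5, (2 * i ≠ 2 * j ∧ ¬ (2 * j = 2 * i + 1 ∨ 2 * i = 2 * j + 1)) ↔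
        (j = i + 1 ∨ i = j + 1) := by decide
    rw [compl_adj, hc.2, hc.1.ne_iff]
    exact key i j

/-- Two consecutive neighbours on the cycle, next to a non-neighbour, and a private anticenter. -/
lemma pair_next {G : SimpleGraph V} (hB : BullFree G) {c : Fin 5 → V} (hc : IsInducedC5 G c)
    {z v : V} (hz0 : ∀ i, ¬ G.Adj z (c i)) (hzv : G.Adj z v) (i : Fin 5)
    (h1 : G.Adj v (c i)) (h2 : G.Adj v (c (i + 1))) : G.Adj v (c (i + 4)) := by
  by_contra h
  have e1 : G.Adj (c i) (c (i + 4)) := (hc.2 _ _).2 (by clear * -; decide +revert)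
  have e2 : G.Adj (c i) (c (i + 1)) := (hc.2 _ _).2 (by clear * -; decide +revert)
  have e3 : ¬ G.Adj (c (i + 4)) (c (i + 1)) := fun h => by
    have := (hc.2 _ _).1 h
    revert this; clear * -; decide +revert
  exact no_bull hB z v (c i) (c (i + 4)) (c (i + 1)) hzv h1 e1 h2 e2 (hz0 _) (hz0 _) (hz0 _) h e3

lemma bool_center (f : Fin 5 → Bool) (h : ∀ i, f i = true → f (i + 1) = true → f (i + 4) = true)
    (h' : ∀ i, f i = true → f (i + 1) = false → f (i + 3) = true)
    (i₀ : Fin 5) (h0 : f i₀ = true) : ∀ i, f i = true := by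
  revert f; decide +revert

lemma bool_edge (f : Fin 5 → Bool) (h : ∀ i, f i = true → f (i + 1) = true)
    (i₀ : Fin 5) (h0 : f i₀ = true) : ∀ i, f i = true := by
  revert f; decide +revert

lemma bool_nonedge (f : Fin 5 → Bool) (h : ∀ i, f i = true → f (i + 2) = true)
    (i₀ : Fin 5) (h0 : f i₀ = true) : ∀ i, f i = true := by
  revert f; decide +revert

lemma lemA {G : SimpleGraph V} (hB : BullFree G) {c : Fin 5 → V} (hc : IsInducedC5 G c)
    {x z v : V} (hx : ∀ i, G.Adj x (c i)) (hz0 : ∀ i, ¬ G.Adj z (c i)) (hzx : G.Adj z x)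
    (i₀ : Fin 5) (h0 : G.Adj v (c i₀)) (hv : ¬ ∀ i, G.Adj v (c i)) : G.Adj x v := by
  classical
  by_contra hxv
  have hvx : ¬ G.Adj v x := fun h => hxv h.symm
  have adj1 : ∀ i, G.Adj (c i) (c (i + 1)) := fun i => (hc.2 _ _).2 (Or.inl rfl)
  have hzv : G.Adj z v := by
    by_contra hzv
    apply hv
    have := bool_edge (fun i => decide (G.Adj v (c i))) ?_ i₀ (by simpa using h0)
    · simpa using this
    · intro i h
      simp only [decide_eq_true_eq] at h ⊢
      by_contra h'
      exact no_bull hB z x (c i) v (c (i + 1)) hzx (hx i) h.symm (hx _) (adj1 i) (hz0 _) hzv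
        (hz0 _) hxv h'
  apply hv
  have := bool_center (fun i => decide (G.Adj v (c i))) ?_ ?_ i₀ (by simpa using h0)
  · simpa using this
  · intro i h1 h2
    simp only [decide_eq_true_eq] at h1 h2 ⊢
    exact pair_next hB hc hz0 hzv i h1 h2
  · intro i h1 h2
    simp only [decide_eq_true_eq, decide_eq_false_iff_not] at h1 h2 ⊢
    by_contra h3
    have e1 : ¬ G.Adj (c i) (c (i + 3)) := fun h => by
      have := (hc.2 _ _).1 h
      revert this; clear * -; decide +revert
    have e2 : ¬ G.Adj (c (i + 3)) (c (i + 1)) := fun h => by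
      have := (hc.2 _ _).1 h
      revert this; clear * -; decide +revert
    exact no_bull hB v (c i) x (c (i + 3)) (c (i + 1)) h1 (hx i).symm (hx _) (adj1 i) (hx _)
      hvx h3 h2 e1 e2

/-- If every center of the cycle has an anticenter as a neighbour, and there is a center, then the
component of the noncenters containing the cycle is a proper homogeneous set. -/
lemma hom_of_good {G : SimpleGraph V} (hB : BullFree G) {c : Fin 5 → V} (hc : IsInducedC5 G c)
    (hgood : ∀ x, (∀ i, G.Adj x (c i)) → ∃ z, (∀ i, ¬ G.Adj z (c i)) ∧ G.Adj z x)
    (x₀ : V) (hx₀ : ∀ i, G.Adj x₀ (c i)) : ∃ S, IsProperHomogeneous G S := by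
  classical
  let R : V → V → Prop := fun a b => G.Adj a b ∧ ¬ ∀ i, G.Adj b (c i)
  have adj1 : ∀ i, G.Adj (c i) (c (i + 1)) := fun i => (hc.2 _ _).2 (Or.inl rfl)
  have hcc : ∀ j, ¬ ∀ i, G.Adj (c j) (c i) := fun j h => G.loopless.irrefl _ (h j)
  have key : ∀ x, (∀ i, G.Adj x (c i)) → ∀ w, Relation.ReflTransGen R (c 0) w →
      (¬ ∀ i, G.Adj w (c i)) ∧ G.Adj x w ∧
      ∀ u, (∀ i, ¬ G.Adj u (c i)) → ¬ G.Adj u x → ¬ G.Adj u w := by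
    intro x hx w hw
    obtain ⟨z, hz0, hzx⟩ := hgood x hx
    induction hw with
    | refl => exact ⟨hcc 0, hx 0, fun u hu _ => hu 0⟩
    | @tail w v _ hwv ih =>
      obtain ⟨hwc, hxw, hwu⟩ := ih
      obtain ⟨hadj, hvc⟩ := hwv
      refine ⟨hvc, ?_⟩
      by_cases hmix : ∃ i, G.Adj v (c i)
      · obtain ⟨i₀, h0⟩ := hmix
        have hxv := lemA hB hc hx hz0 hzx i₀ h0 hvc
        refine ⟨hxv, fun u hu hux huv => hvc ?_⟩
        have := bool_nonedge (fun i => decide (G.Adj v (c i))) ?_ i₀ (by simpa using h0)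
        · simpa using this
        · intro i h
          simp only [decide_eq_true_eq] at h ⊢
          by_contra h'
          have e2 : ¬ G.Adj (c (i + 2)) (c i) := fun h => by
            have := (hc.2 _ _).1 h
            revert this; clear * -; decide +revert
          exact no_bull hB u v x (c (i + 2)) (c i) huv hxv.symm (hx _) h (hx _) hux (hu _) (hu _)
            h' e2
      · push Not at hmix
        have hxv : G.Adj x v := by
          by_contra h
          exact hwu v hmix (fun h' => h h'.symm) hadj.symm
        refine ⟨hxv, fun u hu hux huv => ?_⟩
        push Not at hwc
        obtain ⟨j, hj⟩ := hwc
        exact no_bull hB u v x (c j) w huv hxv.symm (hx j) hadj.symm hxw hux (hu _)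
          (hwu u hu hux) (hmix j) (fun h => hj h.symm)
  refine ⟨{w | Relation.ReflTransGen R (c 0) w}, fun v hv => ?_, ?_, ?_⟩
  · by_cases hvc : ∀ i, G.Adj v (c i)
    · exact Or.inl fun s hs => (key v hvc s hs).2.1
    · exact Or.inr fun s hs h => hv (Relation.ReflTransGen.tail hs ⟨h.symm, hvc⟩)
  · exact ⟨c 0, Relation.ReflTransGen.refl, c 1,
      Relation.ReflTransGen.single ⟨adj1 0, hcc 1⟩, (adj1 0).ne⟩
  · intro h
    have : x₀ ∈ {w | Relation.ReflTransGen R (c 0) w} := h ▸ Set.mem_univ _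
    exact (key x₀ hx₀ x₀ this).1 hx₀

lemma umbrella {G : SimpleGraph V} (hB : BullFree G) {c : Fin 5 → V} (hc : IsInducedC5 G c)
    {x z : V} (hx : ∀ i, G.Adj x (c i)) (hz : z ∉ Set.range c) (hz0 : ∀ i, ¬ G.Adj z (c i)) :
    ∃ S, IsProperHomogeneous G S := by
  by_cases hgood : ∀ x, (∀ i, G.Adj x (c i)) → ∃ z, (∀ i, ¬ G.Adj z (c i)) ∧ G.Adj z x
  · exact hom_of_good hB hc hgood x hx
  · push Not at hgood
    obtain ⟨a, ha, hbad⟩ := hgood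
    suffices h : ∃ S, IsProperHomogeneous Gᶜ S from h.imp fun S hS => hom_compl hS
    refine hom_of_good (bull_compl hB) (c5_compl hc) (fun y hy => ?_) z (fun i => ?_)
    · have hy' : ∀ i, ¬ G.Adj y (c i) := by
        intro i
        have h1 := ((compl_adj _ _ _).1 (hy (3 * i))).2
        have : (2 * (3 * i) : Fin 5) = i := by clear * -; decide +revert
        rwa [this] at h1
      refine ⟨a, fun i h => ((compl_adj _ _ _).1 h).2 (ha _), (compl_adj _ _ _).2 ⟨?_, ?_⟩⟩
      · rintro rfl; exact hy' 0 (ha 0)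
      · exact fun h => hbad y hy' h.symm
    · exact (compl_adj _ _ _).2 ⟨fun h => hz ⟨_, h.symm⟩, hz0 _⟩

lemma no_single {G : SimpleGraph V} (hP : P6Free G) {c : Fin 5 → V} (hc : IsInducedC5 G c)
    {x z : V} (hz : z ∉ Set.range c) (hz0 : ∀ i : Fin 5, ¬ G.Adj z (c i))
    (hx : x ∉ Set.range c) (hzx : G.Adj z x) (i : Fin 5) (h0 : G.Adj x (c i))
    (h1 : ¬ G.Adj x (c (i + 1))) (h2 : ¬ G.Adj x (c (i + 2))) (h3 : ¬ G.Adj x (c (i + 3))) :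
    False := by
  have hz' : ∀ j, z ≠ c j := fun j h => hz ⟨j, h.symm⟩
  have hx' : ∀ j, x ≠ c j := fun j h => hx ⟨j, h.symm⟩
  have hz1 : ∀ j, ¬ G.Adj (c j) z := fun j h => hz0 j h.symm
  have hx0 := h0.symm
  have hx1 : ¬ G.Adj (c (i + 1)) x := fun h => h1 h.symm
  have hx2 : ¬ G.Adj (c (i + 2)) x := fun h => h2 h.symm
  have hx3 : ¬ G.Adj (c (i + 3)) x := fun h => h3 h.symm
  apply hP
  refine ⟨![z, x, c i, c (i + 1), c (i + 2), c (i + 3)], ?_, ?_⟩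
  · intro a b hab
    fin_cases a <;> fin_cases b <;>
      simp [hz', hx', fun j => (hz' j).symm, fun j => (hx' j).symm, hzx.ne, hzx.ne',
        hc.1.eq_iff] at hab ⊢
  · have a1 := hzx.symm
    intro a b
    fin_cases a <;> fin_cases b <;>
      simp [hz0, hz1, hzx, a1, h0, hx0, h1, h2, h3, hx1, hx2, hx3, hc.2] <;>
      (clear * -; decide +revert)

lemma bool_final (f : Fin 5 → Bool) (h : ∀ i, f i = true → f (i + 1) = true → f (i + 4) = true)
    (h' : ∀ i, f i = true → f (i + 1) = false → f (i + 2) = false → f (i + 3) = false → False)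
    (hk : 1 ≤ (Finset.univ.filter fun i : Fin 5 => f i = true).card) :
    (Finset.univ.filter fun i : Fin 5 => f i = true).card = 2 ∨ ∀ i, f i = true := by
  revert f; decide

theorem stmt6 (G : SimpleGraph V) [DecidableRel G.Adj]
    (hP : P6Free G) (hB : BullFree G) (hPr : IsPrimeGraph G)
    (c : Fin 5 → V) (hc : IsInducedC5 G c)
    (z : V) (hz : z ∉ Set.range c) (hz0 : ∀ i : Fin 5, ¬ G.Adj z (c i))
    (x : V) (hx : x ∉ Set.range c) (hzx : G.Adj z x)
    (hk1 : 1 ≤ nbrCount G c x) :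
    nbrCount G c x = 2 := by
  have := bool_final (fun i => decide (G.Adj x (c i))) ?_ ?_ (by simpa [nbrCount] using hk1)
  · rcases this with h | h
    · simpa [nbrCount] using h
    · exact absurd (umbrella hB hc (by simpa using h) hz hz0) hPr
  · intro i h1 h2
    simp only [decide_eq_true_eq] at h1 h2 ⊢
    exact pair_next hB hc hz0 hzx i h1 h2
  · intro i h0 h1 h2 h3
    simp only [decide_eq_true_eq, decide_eq_false_iff_not] at h0 h1 h2 h3
    exact no_single hP hc hz hz0 hx hzx i h0 h1 h2 h3
end

section
/- Let G be a prime (P6, bull)-free graph containing an induced 5-cycle C such that some vertex of G has no neighbor on C. Then no vertex outside C has exactly three neighbors on C and no vertex outside C is adjacent to all five vertices of C. -/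
open SimpleGraph

variable {V : Type*}

namespace PB

/-- A bull, given only by its adjacencies and non-adjacencies. -/
theorem bull {V : Type*} {G : SimpleGraph V} (hB : BullFree G) (a b c d e : V)
    (h1 : G.Adj a b) (h2 : G.Adj b c) (h3 : G.Adj c d) (h4 : G.Adj b e) (h5 : G.Adj c e)
    (n1 : ¬ G.Adj a c) (n2 : ¬ G.Adj a d) (n3 : ¬ G.Adj a e) (n4 : ¬ G.Adj b d)
    (n5 : ¬ G.Adj d e) : False := by
  refine hB a b c d e ⟨h1.ne, ?_, ?_, ?_, h2.ne, ?_, h4.ne, h3.ne, h5.ne, ?_,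
    h1, h2, h3, h4, h5, n1, n2, n3, n4, n5⟩
  · rintro rfl; exact n2 h3
  · rintro rfl; exact n4 h1.symm
  · rintro rfl; exact n1 h5.symm
  · rintro rfl; exact n2 h1
  · rintro rfl; exact n4 h4

/-- A path on six vertices, given only by its adjacencies and non-adjacencies. -/
theorem p6 {V : Type*} {G : SimpleGraph V} (hP : P6Free G) (a b c d e f : V)
    (h1 : G.Adj a b) (h2 : G.Adj b c) (h3 : G.Adj c d) (h4 : G.Adj d e) (h5 : G.Adj e f)
    (n1 : ¬ G.Adj a c) (n2 : ¬ G.Adj a d) (n3 : ¬ G.Adj a e) (n4 : ¬ G.Adj a f)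
    (n5 : ¬ G.Adj b d) (n6 : ¬ G.Adj b e) (n7 : ¬ G.Adj b f)
    (n8 : ¬ G.Adj c e) (n9 : ¬ G.Adj c f) (n10 : ¬ G.Adj d f) : False := by
  have key : ∀ i j : Fin 6, G.Adj (![a, b, c, d, e, f] i) (![a, b, c, d, e, f] j) ↔
      (i.val + 1 = j.val ∨ j.val + 1 = i.val) := by
    intro i j
    fin_cases i <;> fin_cases j <;> simp [*, G.adj_comm] <;>
      first
        | assumption
        | (rw [G.adj_comm]; assumption)
  refine hP ⟨![a, b, c, d, e, f], ?_, key⟩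
  intro i j hij
  have h : ∀ k : Fin 6, (i.val + 1 = k.val ∨ k.val + 1 = i.val) ↔
      (j.val + 1 = k.val ∨ k.val + 1 = j.val) := by
    intro k
    rw [← key i k, ← key j k, hij]
  clear hij key
  revert i j
  decide

/-- Five vertices in cyclic order inducing a 5-cycle. -/
def C5 {V : Type*} (G : SimpleGraph V) (a b c d e : V) : Prop :=
  G.Adj a b ∧ G.Adj b c ∧ G.Adj c d ∧ G.Adj d e ∧ G.Adj e a ∧
  ¬ G.Adj a c ∧ ¬ G.Adj b d ∧ ¬ G.Adj c e ∧ ¬ G.Adj d a ∧ ¬ G.Adj e b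

/-- `z` is adjacent to all five vertices. -/
def Comp {V : Type*} (G : SimpleGraph V) (a b c d e z : V) : Prop :=
  G.Adj z a ∧ G.Adj z b ∧ G.Adj z c ∧ G.Adj z d ∧ G.Adj z e

/-- `z` is adjacent to none of the five vertices. -/
def Anti {V : Type*} (G : SimpleGraph V) (a b c d e z : V) : Prop :=
  ¬ G.Adj z a ∧ ¬ G.Adj z b ∧ ¬ G.Adj z c ∧ ¬ G.Adj z d ∧ ¬ G.Adj z e

theorem C5.rot {V : Type*} {G : SimpleGraph V} {a b c d e : V} (h : C5 G a b c d e) :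
    C5 G b c d e a := by
  obtain ⟨h1, h2, h3, h4, h5, n1, n2, n3, n4, n5⟩ := h
  exact ⟨h2, h3, h4, h5, h1, n2, n3, n4, n5, n1⟩

theorem C5.refl {V : Type*} {G : SimpleGraph V} {a b c d e : V} (h : C5 G a b c d e) :
    C5 G a e d c b := by
  obtain ⟨h1, h2, h3, h4, h5, n1, n2, n3, n4, n5⟩ := h
  exact ⟨h5.symm, h4.symm, h3.symm, h2.symm, h1.symm, fun h => n4 h.symm, fun h => n3 h.symm,
    fun h => n2 h.symm, fun h => n1 h.symm, fun h => n5 h.symm⟩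

/-- A mixed vertex: after relabelling, it is adjacent to `a` and not to `b`. -/
theorem mixed {V : Type*} {G : SimpleGraph V} {a b c d e y : V} (h : C5 G a b c d e)
    (h1 : ¬ Comp G a b c d e y) (h2 : ¬ Anti G a b c d e y) :
    ∃ a' b' c' d' e', C5 G a' b' c' d' e' ∧
      (∀ P : V → Prop, P a → P b → P c → P d → P e → P a' ∧ P b' ∧ P c' ∧ P d' ∧ P e') ∧
      G.Adj y a' ∧ ¬ G.Adj y b' := by
  by_cases k1 : G.Adj y a ∧ ¬ G.Adj y b
  · exact ⟨a, b, c, d, e, h, by tauto, k1⟩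
  by_cases k2 : G.Adj y b ∧ ¬ G.Adj y c
  · exact ⟨b, c, d, e, a, h.rot, by tauto, k2⟩
  by_cases k3 : G.Adj y c ∧ ¬ G.Adj y d
  · exact ⟨c, d, e, a, b, h.rot.rot, by tauto, k3⟩
  by_cases k4 : G.Adj y d ∧ ¬ G.Adj y e
  · exact ⟨d, e, a, b, c, h.rot.rot.rot, by tauto, k4⟩
  by_cases k5 : G.Adj y e ∧ ¬ G.Adj y a
  · exact ⟨e, a, b, c, d, h.rot.rot.rot.rot, by tauto, k5⟩
  exfalso
  unfold Comp at h1
  unfold Anti at h2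
  tauto

/-- A mixed vertex with a neighbour anticomplete to the cycle has exactly two nonadjacent
neighbours on the cycle. -/
theorem type2 {V : Type*} {G : SimpleGraph V} (hP : P6Free G) (hB : BullFree G)
    {a b c d e x y : V} (h : C5 G a b c d e) (hx : Anti G a b c d e x)
    (hxy : G.Adj x y)
    (h1 : ¬ Comp G a b c d e y) (h2 : ¬ Anti G a b c d e y) :
    ∃ a' b' c' d' e', C5 G a' b' c' d' e' ∧
      (∀ P : V → Prop, P a → P b → P c → P d → P e → P a' ∧ P b' ∧ P c' ∧ P d' ∧ P e') ∧
      G.Adj y a' ∧ ¬ G.Adj y b' ∧ G.Adj y c' ∧ ¬ G.Adj y d' ∧ ¬ G.Adj y e' := by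
  obtain ⟨a', b', c', d', e', h', tr, ya, yb⟩ := mixed h h1 h2
  obtain ⟨x1, x2, x3, x4, x5⟩ := tr (fun t => ¬ G.Adj x t) hx.1 hx.2.1 hx.2.2.1 hx.2.2.2.1 hx.2.2.2.2
  clear h h1 h2 hx
  have h0 := h'
  obtain ⟨e1, e2, e3, e4, e5, n1, n2, n3, n4, n5⟩ := h'
  have ye : ¬ G.Adj y e' := by
    intro ye
    have := bull hB x y a' b' e'
    grind [G.adj_comm]
  have B2 := bull hB x y c' b' d'
  have B3 := p6 hP x y a' b' c' d'
  by_cases yc : G.Adj y c'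
  · exact ⟨a', b', c', d', e', h0, tr, ya, yb, yc, by grind [G.adj_comm], ye⟩
  · refine ⟨a', e', d', c', b', h0.refl, ?_, ya, ye, by grind [G.adj_comm], yc, yb⟩
    intro P pa pb pc pd pe
    obtain ⟨q1, q2, q3, q4, q5⟩ := tr P pa pb pc pd pe
    exact ⟨q1, q5, q4, q3, q2⟩

/-- Neighbours propagate along edges among anticomplete vertices. -/
theorem F5 {V : Type*} {G : SimpleGraph V} (hP : P6Free G) (hB : BullFree G)
    {a b c d e x x' y : V} (h : C5 G a b c d e) (hx : Anti G a b c d e x)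
    (hx' : Anti G a b c d e x') (hxy : G.Adj x y) (hxx : G.Adj x x')
    (h1 : ¬ Comp G a b c d e y) (h2 : ¬ Anti G a b c d e y) : G.Adj x' y := by
  obtain ⟨a', b', c', d', e', h', tr, ya, yb, yc, yd, ye⟩ := type2 hP hB h hx hxy h1 h2
  obtain ⟨x1, x2, x3, x4, x5⟩ := tr (fun t => ¬ G.Adj x t) hx.1 hx.2.1 hx.2.2.1 hx.2.2.2.1 hx.2.2.2.2
  obtain ⟨z1, z2, z3, z4, z5⟩ :=
    tr (fun t => ¬ G.Adj x' t) hx'.1 hx'.2.1 hx'.2.2.1 hx'.2.2.2.1 hx'.2.2.2.2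
  obtain ⟨e1, e2, e3, e4, e5, n1, n2, n3, n4, n5⟩ := h'
  clear h h1 h2 hx hx' tr
  have := p6 hP x' x y a' e' d'
  grind [G.adj_comm]

theorem F3 {V : Type*} {G : SimpleGraph V} (hP : P6Free G) (hB : BullFree G)
    {a b c d e x y z : V} (h : C5 G a b c d e) (hx : Anti G a b c d e x)
    (hz : Comp G a b c d e z) (hxy : G.Adj x y)
    (h1 : ¬ Comp G a b c d e y) (h2 : ¬ Anti G a b c d e y) : G.Adj z x ∧ G.Adj z y := by
  obtain ⟨a', b', c', d', e', h', tr, ya, yb, yc, yd, ye⟩ := type2 hP hB h hx hxy h1 h2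
  obtain ⟨x1, x2, x3, x4, x5⟩ := tr (fun t => ¬ G.Adj x t) hx.1 hx.2.1 hx.2.2.1 hx.2.2.2.1 hx.2.2.2.2
  obtain ⟨z1, z2, z3, z4, z5⟩ :=
    tr (fun t => G.Adj z t) hz.1 hz.2.1 hz.2.2.1 hz.2.2.2.1 hz.2.2.2.2
  obtain ⟨e1, e2, e3, e4, e5, n1, n2, n3, n4, n5⟩ := h'
  clear h h1 h2 hx hz tr
  have zy : G.Adj z y := by
    have := bull hB y a' z d' b'
    grind [G.adj_comm]
  have := bull hB x y z d' a'
  refine ⟨?_, zy⟩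
  grind [G.adj_comm]

theorem F4 {V : Type*} {G : SimpleGraph V} (hP : P6Free G) (hB : BullFree G)
    {a b c d e x y z : V} (h : C5 G a b c d e) (hx : Anti G a b c d e x)
    (hz : Comp G a b c d e z) (hxz : G.Adj x z)
    (h1 : ¬ Comp G a b c d e y) (h2 : ¬ Anti G a b c d e y) : G.Adj z y := by
  by_cases hxy : G.Adj x y
  · exact (F3 hP hB h hx hz hxy h1 h2).2
  obtain ⟨a', b', c', d', e', h', tr, ya, yb⟩ := mixed h h1 h2
  obtain ⟨x1, x2, x3, x4, x5⟩ := tr (fun t => ¬ G.Adj x t) hx.1 hx.2.1 hx.2.2.1 hx.2.2.2.1 hx.2.2.2.2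
  obtain ⟨z1, z2, z3, z4, z5⟩ :=
    tr (fun t => G.Adj z t) hz.1 hz.2.1 hz.2.2.1 hz.2.2.2.1 hz.2.2.2.2
  obtain ⟨e1, e2, e3, e4, e5, n1, n2, n3, n4, n5⟩ := h'
  clear h h1 h2 hx hz tr
  have := bull hB x z a' y b'
  grind [G.adj_comm]

/-- In a prime (P6, bull)-free graph no 5-cycle has both a center and an anticenter. -/
theorem noCenter {V : Type*} {G : SimpleGraph V} (hP : P6Free G) (hB : BullFree G)
    (hPr : IsPrimeGraph G) {a b c d e x z : V} (h : C5 G a b c d e)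
    (hx : Anti G a b c d e x) (hz : Comp G a b c d e z) : False := by
  have aM : ¬ Comp G a b c d e a ∧ ¬ Anti G a b c d e a :=
    ⟨fun k => G.irrefl k.1, fun k => k.2.1 h.1⟩
  have bM : ¬ Comp G a b c d e b ∧ ¬ Anti G a b c d e b :=
    ⟨fun k => G.irrefl k.2.1, fun k => k.2.2.1 h.2.1⟩
  have hCA : ∀ t, Comp G a b c d e t → ¬ Anti G a b c d e t := fun t k k' => k'.1 k.1
  have hne : a ≠ b := h.1.ne
  by_cases hB1 : ∃ x' y', Anti G a b c d e x' ∧ G.Adj x' y' ∧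
      ¬ Comp G a b c d e y' ∧ ¬ Anti G a b c d e y'
  · obtain ⟨x0, y0, hx0, hxy0, hy1, hy2⟩ := hB1
    have hcomp : ∀ s y, Comp G a b c d e s → ¬ Comp G a b c d e y → ¬ Anti G a b c d e y →
        G.Adj s y := by
      intro s y hs k1 k2
      have := (F3 hP hB h hx0 hs hxy0 hy1 hy2).1
      exact F4 hP hB h hx0 hs this.symm k1 k2
    apply hPr
    refine ⟨{t | ¬ Comp G a b c d e t ∧ (Anti G a b c d e t → ∃ y, G.Adj t y ∧
      ¬ Comp G a b c d e y ∧ ¬ Anti G a b c d e y)}, ?_,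
      ⟨a, ⟨aM.1, fun k => absurd k aM.2⟩, b, ⟨bM.1, fun k => absurd k bM.2⟩, hne⟩, ?_⟩
    · intro v hv
      by_cases hvA : Comp G a b c d e v
      · left
        rintro s ⟨hs1, hs2⟩
        by_cases hsB : Anti G a b c d e s
        · obtain ⟨y, hsy, k1, k2⟩ := hs2 hsB
          exact (F3 hP hB h hsB hvA hsy k1 k2).1
        · exact hcomp v s hvA hs1 hsB
      · right
        have hvB : Anti G a b c d e v ∧ ∀ y, G.Adj v y → ¬ Comp G a b c d e y →
            Anti G a b c d e y := by
          simp only [Set.mem_ofPred_eq] at hv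
          grind
        rintro s ⟨hs1, hs2⟩ hvs
        have hsB := hvB.2 s hvs hs1
        obtain ⟨y, hsy, k1, k2⟩ := hs2 hsB
        exact k2 (hvB.2 y (F5 hP hB h hsB hvB.1 hsy hvs.symm k1 k2) k1)
    · intro hu
      have : z ∈ (Set.univ : Set V) := trivial
      rw [← hu] at this
      exact this.1 hz
  · have hBM : ∀ x' y', Anti G a b c d e x' → ¬ Comp G a b c d e y' → ¬ Anti G a b c d e y' →
        ¬ G.Adj x' y' := fun x' y' k1 k2 k3 k4 => hB1 ⟨x', y', k1, k4, k2, k3⟩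
    apply hPr
    refine ⟨{t | ¬ Anti G a b c d e t ∧ (Comp G a b c d e t →
      (∀ x', Anti G a b c d e x' → ¬ G.Adj x' t) ∧
      (∀ d' x', Comp G a b c d e d' → Anti G a b c d e x' → G.Adj x' d' → G.Adj d' t))}, ?_,
      ⟨a, ⟨aM.2, fun k => absurd k aM.1⟩, b, ⟨bM.2, fun k => absurd k bM.1⟩, hne⟩, ?_⟩
    · intro v hv
      by_cases hvB : Anti G a b c d e v
      · right
        rintro s ⟨hs1, hs2⟩
        by_cases hsA : Comp G a b c d e s
        · exact (hs2 hsA).1 v hvB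
        · exact hBM v s hvB hsA hs1
      left
      have hvA : Comp G a b c d e v := by
        by_contra k
        exact hv ⟨hvB, fun k' => absurd k' k⟩
      by_cases hD : ∃ x', Anti G a b c d e x' ∧ G.Adj x' v
      · obtain ⟨x', hx', hxv⟩ := hD
        rintro s ⟨hs1, hs2⟩
        by_cases hsA : Comp G a b c d e s
        · exact (hs2 hsA).2 v x' hvA hx' hxv
        · exact F4 hP hB h hx' hvA hxv hsA hs1
      · have hvn : ∀ x', Anti G a b c d e x' → ¬ G.Adj x' v := fun x' k1 k2 => hD ⟨x', k1, k2⟩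
        have : ∃ d' x', Comp G a b c d e d' ∧ Anti G a b c d e x' ∧ G.Adj x' d' ∧
            ¬ G.Adj d' v := by
          by_contra k
          push Not at k
          exact hv ⟨hvB, fun _ => ⟨hvn, k⟩⟩
        obtain ⟨d', x', hd', hx', hxd, hdv⟩ := this
        have hxv := hvn x' hx'
        have fin : ∀ t s, G.Adj s t → G.Adj v t → G.Adj d' t → ¬ G.Adj x' t → ¬ G.Adj x' s →
            G.Adj d' s → G.Adj v s := by
          intro t s k1 k2 k3 k4 k5 k6
          have := bull hB x' d' t v s
          grind [G.adj_comm]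
        rintro s ⟨hs1, hs2⟩
        have hxs : ¬ G.Adj x' s := by
          by_cases hsA : Comp G a b c d e s
          · exact (hs2 hsA).1 x' hx'
          · exact hBM x' s hx' hsA hs1
        have hds : G.Adj d' s := by
          by_cases hsA : Comp G a b c d e s
          · exact (hs2 hsA).2 d' x' hd' hx' hxd
          · exact F4 hP hB h hx' hd' hxd hsA hs1
        obtain ⟨v1, v2, v3, v4, v5⟩ := hvA
        obtain ⟨d1, d2, d3, d4, d5⟩ := hd'
        obtain ⟨x1, x2, x3, x4, x5⟩ := hx'
        by_contra hvs
        exact hs1 ⟨fun k => hvs (fin a s k v1 d1 x1 hxs hds),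
          fun k => hvs (fin b s k v2 d2 x2 hxs hds), fun k => hvs (fin c s k v3 d3 x3 hxs hds),
          fun k => hvs (fin d s k v4 d4 x4 hxs hds), fun k => hvs (fin e s k v5 d5 x5 hxs hds)⟩
    · intro hu
      have : x ∈ (Set.univ : Set V) := trivial
      rw [← hu] at this
      exact this.1 hx

/-- The five possible attachments of a neighbour of an anticenter. -/
theorem five {V : Type*} {G : SimpleGraph V} (hP : P6Free G) (hB : BullFree G)
    {a b c d e x y : V} (h : C5 G a b c d e) (hx : Anti G a b c d e x)
    (hxy : G.Adj x y)
    (h1 : ¬ Comp G a b c d e y) (h2 : ¬ Anti G a b c d e y) :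
    (¬ G.Adj y a ∧ G.Adj y b ∧ ¬ G.Adj y c ∧ ¬ G.Adj y d ∧ G.Adj y e) ∨
    (G.Adj y a ∧ ¬ G.Adj y b ∧ G.Adj y c ∧ ¬ G.Adj y d ∧ ¬ G.Adj y e) ∨
    (¬ G.Adj y a ∧ G.Adj y b ∧ ¬ G.Adj y c ∧ G.Adj y d ∧ ¬ G.Adj y e) ∨
    (¬ G.Adj y a ∧ ¬ G.Adj y b ∧ G.Adj y c ∧ ¬ G.Adj y d ∧ G.Adj y e) ∨
    (G.Adj y a ∧ ¬ G.Adj y b ∧ ¬ G.Adj y c ∧ G.Adj y d ∧ ¬ G.Adj y e) := by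
  have loc : ∀ a b c d e : V, C5 G a b c d e → Anti G a b c d e x → G.Adj y a → ¬ G.Adj y b →
      ¬ G.Adj y e ∧ (G.Adj y c ↔ ¬ G.Adj y d) := by
    rintro a b c d e ⟨e1, e2, e3, e4, e5, n1, n2, n3, n4, n5⟩ ⟨x1, x2, x3, x4, x5⟩ ya yb
    have B1 := bull hB x y a b e
    have B2 := bull hB x y c b d
    have B3 := p6 hP x y a b c d
    have ye : ¬ G.Adj y e := by grind [G.adj_comm]
    refine ⟨ye, ?_⟩
    grind [G.adj_comm]
  obtain ⟨x1, x2, x3, x4, x5⟩ := hx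
  have l1 := loc a b c d e h ⟨x1, x2, x3, x4, x5⟩
  have l2 := loc b c d e a h.rot ⟨x2, x3, x4, x5, x1⟩
  have l3 := loc c d e a b h.rot.rot ⟨x3, x4, x5, x1, x2⟩
  have l4 := loc d e a b c h.rot.rot.rot ⟨x4, x5, x1, x2, x3⟩
  have l5 := loc e a b c d h.rot.rot.rot.rot ⟨x5, x1, x2, x3, x4⟩
  unfold Comp at h1
  unfold Anti at h2
  clear loc h
  grind

/-- An anticenter is not adjacent to a vertex with exactly three consecutive neighbours. -/
theorem anti3 {V : Type*} {G : SimpleGraph V} (hB : BullFree G)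
    {a b c d e x v : V} (h : C5 G a b c d e) (hx : Anti G a b c d e x)
    (va : G.Adj v a) (vb : G.Adj v b) (vc : ¬ G.Adj v c) : ¬ G.Adj x v := by
  obtain ⟨e1, e2, e3, e4, e5, n1, n2, n3, n4, n5⟩ := h
  obtain ⟨x1, x2, x3, x4, x5⟩ := hx
  have := bull hB x v b c a
  grind [G.adj_comm]

theorem endConfig {V : Type*} {G : SimpleGraph V} (hP : P6Free G) (hB : BullFree G)
    {a b c d e x u v w : V} (h : C5 G a b c d e) (hx : Anti G a b c d e x)
    (hxu : G.Adj x u)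
    (h1 : ¬ Comp G a b c d e u) (h2 : ¬ Anti G a b c d e u)
    (va : G.Adj v a) (vb : G.Adj v b) (vc : ¬ G.Adj v c) (vd : ¬ G.Adj v d) (ve : G.Adj v e)
    (wa : G.Adj w a) (wb : G.Adj w b) (wc : G.Adj w c) (wd : G.Adj w d) (we : ¬ G.Adj w e)
    (wv : ¬ G.Adj w v) : False := by
  have xv := anti3 hB h hx va vb vc
  have hf := five hP hB h hx hxu h1 h2
  obtain ⟨e1, e2, e3, e4, e5, n1, n2, n3, n4, n5⟩ := h
  obtain ⟨x1, x2, x3, x4, x5⟩ := hx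
  clear h1 h2
  have xw : ¬ G.Adj x w := by
    have := bull hB x w a e b
    grind [G.adj_comm]
  rcases hf with ⟨ua, ub, uc, ud, ue⟩ | ⟨ua, ub, uc, ud, ue⟩ | ⟨ua, ub, uc, ud, ue⟩ |
    ⟨ua, ub, uc, ud, ue⟩ | ⟨ua, ub, uc, ud, ue⟩
  · have uv : ¬ G.Adj u v := by
      have := bull hB x u b c v
      grind [G.adj_comm]
    have uw : ¬ G.Adj u w := by
      have := bull hB x u b v w
      grind [G.adj_comm]
    have := p6 hP x u e a w c
    grind [G.adj_comm]
  · have uv : G.Adj u v := by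
      have := p6 hP x u c d e v
      grind [G.adj_comm]
    have uw : G.Adj u w := by
      have := p6 hP x u v e d w
      grind [G.adj_comm]
    have := bull hB x u a e w
    grind [G.adj_comm]
  · have uv : ¬ G.Adj u v := by
      have := bull hB x u b c v
      grind [G.adj_comm]
    have uw : ¬ G.Adj u w := by
      have := bull hB x u b v w
      grind [G.adj_comm]
    have := p6 hP x u d w a v
    grind [G.adj_comm]
  · have uv : ¬ G.Adj u v := by
      have := bull hB x u e d v
      grind [G.adj_comm]
    have uw : G.Adj u w := by
      have := p6 hP x u e v b w
      grind [G.adj_comm]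
    have := bull hB a w u x c
    grind [G.adj_comm]
  · have uv : G.Adj u v := by
      have := p6 hP x u d c b v
      grind [G.adj_comm]
    have uw : ¬ G.Adj u w := by
      have := bull hB x u d e w
      grind [G.adj_comm]
    have := bull hB x u a w v
    grind [G.adj_comm]

/-- Some anticenter has a neighbour that is mixed on the cycle. -/
theorem exists_xu {V : Type*} {G : SimpleGraph V} (hP : P6Free G) (hB : BullFree G)
    (hPr : IsPrimeGraph G) {a b c d e x : V} (h : C5 G a b c d e)
    (hx : Anti G a b c d e x) : ∃ x' u, Anti G a b c d e x' ∧ G.Adj x' u ∧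
      ¬ Comp G a b c d e u ∧ ¬ Anti G a b c d e u := by
  by_contra hcon
  apply hPr
  refine ⟨{t | ¬ Anti G a b c d e t}, ?_,
    ⟨a, fun k => k.2.1 h.1, b, fun k => k.2.2.1 h.2.1, h.1.ne⟩, ?_⟩
  · intro v hv
    right
    intro s hs hvs
    have hv' : Anti G a b c d e v := by
      by_contra k
      exact hv k
    exact hcon ⟨v, s, hv', hvs, fun k => noCenter hP hB hPr h hx k, hs⟩
  · intro hu
    have : x ∈ (Set.univ : Set V) := trivial
    rw [← hu] at this
    exact this hx

theorem finalStep {V : Type*} {G : SimpleGraph V} (hP : P6Free G) (hB : BullFree G)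
    (hPr : IsPrimeGraph G) {a b c d e x v w : V} (h : C5 G a b c d e)
    (hx : Anti G a b c d e x)
    (va : G.Adj v a) (vb : G.Adj v b) (vc : ¬ G.Adj v c) (vd : ¬ G.Adj v d) (ve : G.Adj v e)
    (wa : G.Adj w a) (wv : ¬ G.Adj w v)
    (hw : ¬ (G.Adj w b ∧ ¬ G.Adj w c ∧ ¬ G.Adj w d ∧ G.Adj w e)) : False := by
  obtain ⟨x', u, hx', hxu, h1, h2⟩ := exists_xu hP hB hPr h hx
  have E1 := endConfig (w := w) hP hB h hx' hxu h1 h2 va vb vc vd ve wa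
  have E2 := endConfig (w := w) hP hB h.refl
    ⟨hx'.1, hx'.2.2.2.2, hx'.2.2.2.1, hx'.2.2.1, hx'.2.1⟩ hxu
    (fun k => h1 ⟨k.1, k.2.2.2.2, k.2.2.2.1, k.2.2.1, k.2.1⟩)
    (fun k => h2 ⟨k.1, k.2.2.2.2, k.2.2.2.1, k.2.2.1, k.2.1⟩) va ve vd vc vb wa
  have E3 : ¬ Comp G a b c d e w := fun k => noCenter hP hB hPr h hx k
  unfold Comp at E3
  clear h1 h2 hxu hx' hx
  obtain ⟨e1, e2, e3, e4, e5, n1, n2, n3, n4, n5⟩ := h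
  have B1 := bull hB w a b c v
  have B2 := bull hB w a e d v
  have B3 := bull hB b c d e w
  have B4 := bull hB b a e d w
  have B5 := bull hB e a b c w
  have B6 := bull hB v b c d w
  have B7 := bull hB v e d c w
  by_cases wb : G.Adj w b <;> by_cases wc : G.Adj w c <;> by_cases wd : G.Adj w d <;>
    by_cases we : G.Adj w e <;> grind [G.adj_comm]

/-- No vertex has exactly three consecutive neighbours. -/
theorem noThree {V : Type*} {G : SimpleGraph V} (hP : P6Free G) (hB : BullFree G)
    (hPr : IsPrimeGraph G) {a b c d e x v : V} (h : C5 G a b c d e)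
    (hx : Anti G a b c d e x)
    (va : G.Adj v a) (vb : G.Adj v b) (vc : ¬ G.Adj v c) (vd : ¬ G.Adj v d)
    (ve : G.Adj v e) : False := by
  obtain ⟨e1, e2, e3, e4, e5, n1, n2, n3, n4, n5⟩ := h
  obtain ⟨x1, x2, x3, x4, x5⟩ := hx
  let R : V → Prop := fun t => G.Adj t b ∧ ¬ G.Adj t c ∧ ¬ G.Adj t d ∧ G.Adj t e
  let Z : Set V := {t | Relation.ReflTransGen (fun p q => R q ∧ G.Adj p q) a t}
  have aZ : a ∈ Z := Relation.ReflTransGen.refl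
  have step : ∀ p q, p ∈ Z → R q → G.Adj p q → q ∈ Z :=
    fun p q hp hq hpq => Relation.ReflTransGen.tail hp ⟨hq, hpq⟩
  have cyc : ∀ t, R t → C5 G t b c d e := fun t ht =>
    ⟨ht.1, e2, e3, e4, ht.2.2.2.symm, ht.2.1, n2, n3, fun k => ht.2.2.1 k.symm, n5⟩
  have hZ : ∀ t, t ∈ Z → R t ∧ ¬ G.Adj x t := by
    intro t ht
    induction ht with
    | refl => exact ⟨⟨e1, n1, fun k => n4 k.symm, e5.symm⟩, x1⟩
    | tail _ hpq ih =>
      exact ⟨hpq.1, anti3 hB (cyc _ ih.1) ⟨ih.2, x2, x3, x4, x5⟩ hpq.2.symm hpq.1.1 hpq.1.2.1⟩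
  have hv : v ∈ Z := step a v aZ ⟨vb, vc, vd, ve⟩ va.symm
  apply hPr
  refine ⟨Z, ?_, ⟨a, aZ, v, hv, va.ne'⟩, ?_⟩
  · intro w hw
    have key : ∀ p q, p ∈ Z → q ∈ Z → G.Adj p q → G.Adj w p → G.Adj w q := by
      intro p q hp hq hpq hwp
      by_contra hwq
      obtain ⟨rp, xp⟩ := hZ p hp
      obtain ⟨rq, xq⟩ := hZ q hq
      exact finalStep hP hB hPr (cyc p rp) ⟨xp, x2, x3, x4, x5⟩ hpq.symm rq.1 rq.2.1 rq.2.2.1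
        rq.2.2.2 hwp hwq (fun k => hw (step p w hp k hwp.symm))
    have all : ∀ t, t ∈ Z → (G.Adj w t ↔ G.Adj w a) := by
      intro t ht
      induction ht with
      | refl => rfl
      | tail hp hpq ih =>
        have hq := step _ _ hp hpq.1 hpq.2
        exact ⟨fun k => ih.1 (key _ _ hq hp hpq.2.symm k), fun k => key _ _ hp hq hpq.2 (ih.2 k)⟩
    by_cases hwa : G.Adj w a
    · left
      exact fun s hs => (all s hs).2 hwa
    · right
      exact fun s hs k => hwa ((all s hs).1 k)
  · intro hu
    have : b ∈ (Set.univ : Set V) := trivial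
    rw [← hu] at this
    exact G.irrefl (hZ b this).1.1

theorem ofFun {V : Type*} {G : SimpleGraph V} {c : Fin 5 → V} (hc : IsInducedC5 G c)
    (i : Fin 5) : C5 G (c i) (c (i + 1)) (c (i + 2)) (c (i + 3)) (c (i + 4)) := by
  unfold C5
  simp only [hc.2]
  revert i
  decide

theorem count3 : ∀ p : Fin 5 → Bool, (Finset.univ.filter fun i => p i = true).card = 3 →
    ∃ i, p i = true ∧ p (i + 1) = true ∧ p (i + 2) = false ∧
      ((p (i + 3) = false ∧ p (i + 4) = true) ∨ (p (i + 3) = true ∧ p (i + 4) = false)) := by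
  decide

end PB

theorem stmt8 (G : SimpleGraph V) [DecidableRel G.Adj]
    (hP : P6Free G) (hB : BullFree G) (hPr : IsPrimeGraph G)
    (c : Fin 5 → V) (hc : IsInducedC5 G c)
    (x : V) (hx : x ∉ Set.range c) (hx0 : ∀ i : Fin 5, ¬ G.Adj x (c i)) :
    ∀ v : V, v ∉ Set.range c → nbrCount G c v ≠ 3 ∧ nbrCount G c v ≠ 5 := by
  intro v _
  have hA : ∀ i, PB.Anti G (c i) (c (i + 1)) (c (i + 2)) (c (i + 3)) (c (i + 4)) x :=
    fun i => ⟨hx0 _, hx0 _, hx0 _, hx0 _, hx0 _⟩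
  constructor
  · intro h3
    obtain ⟨i, h0, h1, h2, h34⟩ := PB.count3 (fun i => decide (G.Adj v (c i)))
      (by simpa [nbrCount] using h3)
    simp only [decide_eq_true_eq, decide_eq_false_iff_not] at h0 h1 h2 h34
    have hC := PB.ofFun hc i
    rcases h34 with ⟨h3, h4⟩ | ⟨h3, h4⟩
    · exact PB.noThree hP hB hPr hC (hA i) h0 h1 h2 h3 h4
    · obtain ⟨e1, e2, e3, e4, e5, n1, n2, n3, n4, n5⟩ := hC
      exact PB.bull hB _ _ _ _ v e5 e1 e2 h0.symm h1.symm n5 (fun k => n3 k.symm)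
        (fun k => h4 k.symm) n1 (fun k => h2 k.symm)
  · intro h5
    have hall : ∀ i, G.Adj v (c i) := by
      have : (Finset.univ.filter fun i : Fin 5 => G.Adj v (c i)) = Finset.univ := by
        apply Finset.eq_univ_of_card
        simpa [nbrCount] using h5
      intro i
      have hi := Finset.mem_univ i
      rw [← this] at hi
      exact (Finset.mem_filter.1 hi).2
    exact PB.noCenter hP hB hPr (PB.ofFun hc 0) (hA 0)
      ⟨hall _, hall _, hall _, hall _, hall _⟩
end

section
/- Let G be a prime (P6, bull)-free graph, let x be a vertex of G, and suppose the set of non-neighbors of x contains an induced 5-cycle. Then there is a (possibly empty) clique F in G such that the induced subgraph G \ F is triangle-free. -/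
open SimpleGraph

variable {V : Type*}

/-! ### Local analysis by reflection

A small configuration of vertices `p 0, …, p (n-1)` is described by a list of masks `ms`: bit `i`
of the `j`-th mask (`i < j`) says whether `p i` and `p j` are adjacent. -/

/-- Adjacency read off from a list of masks. -/
def mAdj (ms : List ℕ) (i j : ℕ) : Bool :=
  cond (Nat.blt i j) ((ms.getD j 0).testBit i)
    (cond (Nat.blt j i) ((ms.getD i 0).testBit j) false)

/-- Does the given tuple induce a bull (length 5) or a six-vertex path (length 6)? -/
def fire (ms : List ℕ) : List ℕ → Bool
  | [a, b, c, d, e] =>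
    Nat.blt a ms.length && Nat.blt b ms.length && Nat.blt c ms.length && Nat.blt d ms.length &&
    Nat.blt e ms.length &&
    mAdj ms a b && mAdj ms b c && mAdj ms c d && mAdj ms b e && mAdj ms c e &&
    !mAdj ms a c && !mAdj ms a d && !mAdj ms a e && !mAdj ms b d && !mAdj ms d e
  | [a, b, c, d, e, f] =>
    Nat.blt a ms.length && Nat.blt b ms.length && Nat.blt c ms.length && Nat.blt d ms.length &&
    Nat.blt e ms.length && Nat.blt f ms.length &&
    mAdj ms a b && mAdj ms b c && mAdj ms c d && mAdj ms d e && mAdj ms e f &&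
    !mAdj ms a c && !mAdj ms a d && !mAdj ms a e && !mAdj ms a f && !mAdj ms b d &&
    !mAdj ms b e && !mAdj ms b f && !mAdj ms c e && !mAdj ms c f && !mAdj ms d f
  | _ => false

/-- Some tuple of the list is a bull or a six-vertex path. -/
def fires (cl : List (List ℕ)) (ms : List ℕ) : Bool := cl.any (fire ms)

/-- The masks `ms` describe the graph induced on `p 0, …, p (ms.length - 1)`. -/
def Config (G : SimpleGraph V) (p : ℕ → V) (ms : List ℕ) : Prop :=
  ∀ j < ms.length, ∀ i < j, ((ms.getD j 0).testBit i = true ↔ G.Adj (p i) (p j))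

lemma Config.mAdj {G : SimpleGraph V} {p : ℕ → V} {ms : List ℕ} (h : Config G p ms) {i j : ℕ}
    (hi : i < ms.length) (hj : j < ms.length) : mAdj ms i j = true ↔ G.Adj (p i) (p j) := by
  unfold _root_.mAdj
  rcases lt_trichotomy i j with hij | hij | hij
  · have e : Nat.blt i j = true := by simpa [Nat.blt_eq] using hij
    rw [e]; exact h j hj i hij
  · subst hij
    have e : Nat.blt i i = false := by
      rw [Bool.eq_false_iff]; simp [Nat.blt_eq]
    simp [e]
  · have e : Nat.blt j i = true := by simpa [Nat.blt_eq] using hij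
    have e' : Nat.blt i j = false := by
      rw [Bool.eq_false_iff]; simp [Nat.blt_eq]; omega
    rw [e, e', G.adj_comm]; exact h i hi j hij

/-- In a bull, distinctness of the vertices is automatic. -/
lemma BullFree.elim {G : SimpleGraph V} (hB : BullFree G) {a b c d e : V}
    (h1 : G.Adj a b) (h2 : G.Adj b c) (h3 : G.Adj c d) (h4 : G.Adj b e) (h5 : G.Adj c e)
    (n1 : ¬ G.Adj a c) (n2 : ¬ G.Adj a d) (n3 : ¬ G.Adj a e) (n4 : ¬ G.Adj b d)
    (n5 : ¬ G.Adj d e) : False := by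
  refine hB a b c d e ⟨h1.ne, ?_, ?_, ?_, h2.ne, ?_, h4.ne, h3.ne, h5.ne, ?_, h1, h2, h3, h4, h5,
    n1, n2, n3, n4, n5⟩
  · rintro rfl; exact n2 h3
  · rintro rfl; exact n4 h1.symm
  · rintro rfl; exact n1 h5.symm
  · rintro rfl; exact n2 h1
  · rintro rfl; exact n4 h4

/-- In an induced six-vertex path, distinctness of the vertices is automatic. -/
lemma P6Free.elim {G : SimpleGraph V} (hP : P6Free G) {a b c d e f : V}
    (h1 : G.Adj a b) (h2 : G.Adj b c) (h3 : G.Adj c d) (h4 : G.Adj d e) (h5 : G.Adj e f)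
    (n1 : ¬ G.Adj a c) (n2 : ¬ G.Adj a d) (n3 : ¬ G.Adj a e) (n4 : ¬ G.Adj a f)
    (n5 : ¬ G.Adj b d) (n6 : ¬ G.Adj b e) (n7 : ¬ G.Adj b f) (n8 : ¬ G.Adj c e)
    (n9 : ¬ G.Adj c f) (n10 : ¬ G.Adj d f) : False := by
  have key : ∀ i j : Fin 6, G.Adj (![a, b, c, d, e, f] i) (![a, b, c, d, e, f] j) ↔
      (i.val + 1 = j.val ∨ j.val + 1 = i.val) := by
    intro i j
    fin_cases i <;> fin_cases j <;>
      simp [h1, h2, h3, h4, h5, n1, n2, n3, n4, n5, n6, n7, n8, n9, n10, h1.symm, h2.symm,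
        h3.symm, h4.symm, h5.symm, G.adj_comm c a, G.adj_comm d a, G.adj_comm e a,
        G.adj_comm f a, G.adj_comm d b, G.adj_comm e b, G.adj_comm f b, G.adj_comm e c,
        G.adj_comm f c, G.adj_comm f d]
  refine hP ⟨![a, b, c, d, e, f], ?_, key⟩
  intro i j hij
  have h : ∀ k : Fin 6, (i.val + 1 = k.val ∨ k.val + 1 = i.val) ↔
      (j.val + 1 = k.val ∨ k.val + 1 = j.val) := by
    intro k
    rw [← key i k, ← key j k, hij]
  clear hij key
  revert i j
  decide

lemma Config.fire_false {G : SimpleGraph V} (hP : P6Free G) (hB : BullFree G) {p : ℕ → V}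
    {ms : List ℕ} (h : Config G p ms) (l : List ℕ) : fire ms l = false := by
  rw [Bool.eq_false_iff]
  intro hf
  unfold fire at hf
  split at hf
  · simp only [Bool.and_eq_true, Bool.not_eq_true', Nat.blt_eq, ← Bool.not_eq_true] at hf
    obtain ⟨⟨⟨⟨⟨⟨⟨⟨⟨⟨⟨⟨⟨⟨ha, hb⟩, hc⟩, hd⟩, he⟩, h1⟩, h2⟩, h3⟩, h4⟩, h5⟩, n1⟩, n2⟩, n3⟩, n4⟩, n5⟩ := hf
    rw [h.mAdj (by assumption) (by assumption)] at h1 h2 h3 h4 h5 n1 n2 n3 n4 n5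
    exact hB.elim h1 h2 h3 h4 h5 n1 n2 n3 n4 n5
  · simp only [Bool.and_eq_true, Bool.not_eq_true', Nat.blt_eq, ← Bool.not_eq_true] at hf
    obtain ⟨⟨⟨⟨⟨⟨⟨⟨⟨⟨⟨⟨⟨⟨⟨⟨⟨⟨⟨⟨ha, hb⟩, hc⟩, hd⟩, he⟩, hf⟩, h1⟩, h2⟩, h3⟩, h4⟩, h5⟩, n1⟩, n2⟩, n3⟩, n4⟩,
      n5⟩, n6⟩, n7⟩, n8⟩, n9⟩, n10⟩ := hf
    rw [h.mAdj (by assumption) (by assumption)] at h1 h2 h3 h4 h5 n1 n2 n3 n4 n5 n6 n7 n8 n9 n10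
    exact hP.elim h1 h2 h3 h4 h5 n1 n2 n3 n4 n5 n6 n7 n8 n9 n10
  · exact absurd hf (by simp)

lemma Config.fires_false {G : SimpleGraph V} (hP : P6Free G) (hB : BullFree G) {p : ℕ → V}
    {ms : List ℕ} (h : Config G p ms) (cl : List (List ℕ)) : fires cl ms = false := by
  unfold fires
  rw [List.any_eq_false]
  intro l _
  rw [h.fire_false hP hB l]
  simp

open Classical in
/-- The mask of neighbours of `v` among `p 0, …, p (n-1)`. -/
noncomputable def ty (G : SimpleGraph V) (p : ℕ → V) (n : ℕ) (v : V) : ℕ :=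
  Nat.ofBits (fun i : Fin n => decide (G.Adj (p i) v))

/-- `m` describes the neighbours of `v` among `p 0, …, p (n-1)`. -/
def Desc (G : SimpleGraph V) (p : ℕ → V) (n : ℕ) (v : V) (m : ℕ) : Prop :=
  m < 2 ^ n ∧ ∀ i < n, (m.testBit i = true ↔ G.Adj (p i) v)

lemma ty_desc (G : SimpleGraph V) (p : ℕ → V) (n : ℕ) (v : V) : Desc G p n v (ty G p n v) := by
  classical
  refine ⟨Nat.ofBits_lt_two_pow _, fun i hi => ?_⟩
  unfold ty
  rw [Nat.testBit_ofBits_lt _ _ hi]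
  simp

lemma Desc.unique {G : SimpleGraph V} {p : ℕ → V} {n : ℕ} {v : V} {m m' : ℕ}
    (h : Desc G p n v m) (h' : Desc G p n v m') : m = m' := by
  apply Nat.eq_of_testBit_eq
  intro i
  by_cases hi : i < n
  · rw [Bool.eq_iff_iff, h.2 i hi, h'.2 i hi]
  · have hp : 2 ^ n ≤ 2 ^ i := Nat.pow_le_pow_right (by norm_num) (by omega)
    rw [Nat.testBit_lt_two_pow (h.1.trans_le hp), Nat.testBit_lt_two_pow (h'.1.trans_le hp)]

lemma Desc.ty_eq {G : SimpleGraph V} {p : ℕ → V} {n : ℕ} {v : V} {m : ℕ}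
    (h : Desc G p n v m) : ty G p n v = m := (ty_desc G p n v).unique h

/-- Extending a described configuration by one vertex. -/
lemma Config.snoc {G : SimpleGraph V} {p : ℕ → V} {ms : List ℕ} (h : Config G p ms) {n : ℕ}
    (hn : ms.length = n) {v : V} {m : ℕ} (hm : Desc G p n v m) :
    Config G (Function.update p n v) (ms ++ [m]) := by
  subst hn
  intro j hj i hij
  rw [List.length_append, List.length_singleton] at hj
  have hi : i ≠ ms.length := by omega
  rw [Function.update_of_ne hi]
  by_cases hj' : j < ms.length
  · rw [Function.update_of_ne (by omega), List.getD_append _ _ _ _ hj']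
    exact h j hj' i hij
  · have : j = ms.length := by omega
    subst this
    rw [Function.update_self, List.getD_append_right _ _ _ _ le_rfl]
    simpa using hm.2 i hij

lemma Desc.adj {G : SimpleGraph V} {p : ℕ → V} {n : ℕ} {v w : V} {m : ℕ}
    (h : Desc G p n v m) (ha : G.Adj w v) :
    Desc G (Function.update p n w) (n + 1) v (m ||| 2 ^ n) := by
  refine ⟨Nat.or_lt_two_pow (h.1.trans (by simp [pow_succ])) (by simp [pow_succ]), fun i hi => ?_⟩
  rw [Nat.testBit_or, Nat.testBit_two_pow]
  by_cases hi' : i = n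
  · subst hi'; simp [ha]
  · rw [Function.update_of_ne hi', ← h.2 i (by omega)]
    simp [Ne.symm hi']

lemma Desc.nadj {G : SimpleGraph V} {p : ℕ → V} {n : ℕ} {v w : V} {m : ℕ}
    (h : Desc G p n v m) (ha : ¬ G.Adj w v) :
    Desc G (Function.update p n w) (n + 1) v m := by
  refine ⟨h.1.trans (by simp [pow_succ]), fun i hi => ?_⟩
  by_cases hi' : i = n
  · subst hi'
    simp [ha, Nat.testBit_lt_two_pow h.1]
  · rw [Function.update_of_ne hi', ← h.2 i (by omega)]

/-! ### Components and homogeneous sets -/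

lemma comp_exists (A : V → V → Prop) (hs : ∀ a b, A a b → A b a) (R : V → Prop) (u : V)
    (hu : R u) : ∃ S : Set V, u ∈ S ∧ (∀ v ∈ S, R v) ∧
      (∀ v ∈ S, ∀ w, A v w → R w → w ∈ S) ∧
      (∀ Q : V → Prop, (∃ a ∈ S, Q a) → (∃ b ∈ S, ¬ Q b) →
        ∃ a ∈ S, ∃ b ∈ S, A a b ∧ Q a ∧ ¬ Q b) := by
  refine ⟨{v | Relation.ReflTransGen (fun a b => A a b ∧ R b) u v}, .refl, ?_, ?_, ?_⟩
  · intro v hv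
    induction hv with
    | refl => exact hu
    | tail _ h _ => exact h.2
  · intro v hv w hvw hw
    exact Relation.ReflTransGen.tail hv ⟨hvw, hw⟩
  · rintro Q ⟨a, ha, hQa⟩ ⟨b, hb, hQb⟩
    by_contra hno
    push Not at hno
    have key : ∀ v, Relation.ReflTransGen (fun a b => A a b ∧ R b) u v → (Q v ↔ Q u) := by
      intro v hv
      induction hv with
      | refl => exact Iff.rfl
      | @tail s t hs' h ih =>
        rw [← ih]
        exact ⟨fun ht => hno t (hs'.tail h) s hs' (hs _ _ h.1) ht,
          fun hs'' => hno s hs' t (hs'.tail h) h.1 hs''⟩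
    exact hQb ((key b hb).2 ((key a ha).1 hQa))

lemma IsPrimeGraph.mixed {G : SimpleGraph V} (hPr : IsPrimeGraph G) (S : Set V) {a b c : V}
    (ha : a ∈ S) (hb : b ∈ S) (hab : a ≠ b) (hc : c ∉ S) :
    ∃ w, w ∉ S ∧ (∃ s ∈ S, G.Adj w s) ∧ (∃ s ∈ S, ¬ G.Adj w s) := by
  by_contra hno
  push Not at hno
  refine hPr ⟨S, ?_, ⟨a, ha, b, hb, hab⟩, ?_⟩
  · intro v hv
    by_cases h : ∃ s ∈ S, G.Adj v s
    · obtain ⟨s, hs, hvs⟩ := h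
      exact Or.inl (hno v hv ⟨s, hs, hvs⟩)
    · push Not at h
      exact Or.inr h
  · rintro rfl
    exact hc (Set.mem_univ c)

/-! ### Tables

The configuration `HM` consists of a 5-cycle `0 1 2 3 4`, a vertex `5` with neighbours `1, 4, 6`
and a vertex `6` whose only neighbour is `5`. -/

def HM : List ℕ := [0, 1, 2, 4, 9, 18, 32]

/-- Neighbourhoods in `HM`. -/
def nb (u : ℕ) : ℕ := [18, 37, 10, 20, 41, 82, 32].getD u 0

/-- The possible neighbourhoods of a vertex in `HM`. -/
def TL : List ℕ := [0, 1, 2, 10, 14, 16, 18, 19, 20, 28, 30, 32, 33, 36, 37, 39, 40, 41, 57, 69,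
  73, 74, 82, 84, 96, 114, 127]

/-- The stable ones among them. -/
def T3 : List ℕ := [0, 1, 2, 10, 16, 18, 20, 32, 33, 36, 37, 40, 41, 69, 73, 74, 82, 84]

def clA1 : List (List ℕ) := [
  [4,3,6,5,2], [3,4,6,5,0], [2,3,6,5,4], [4,0,6,5,1], [0,1,6,5,2], [1,2,6,5,3], [4,3,2,1,6,5],
  [4,0,1,2,6,5], [3,2,1,0,6,5], [2,1,0,4,6,5], [1,0,4,3,6,5]]

def clA2 : List (List ℕ) := [
  [7,4,6,5,3], [7,3,6,5,4], [7,4,6,5,0], [7,2,6,5,3], [7,1,6,5,2], [7,0,6,5,1]]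

def clT : List (List ℕ) := [
  [6,5,7,3,1], [5,4,7,2,0], [4,5,7,2,6], [3,4,5,6,7], [2,3,7,6,4], [4,0,1,2,7], [5,1,2,3,7],
  [3,4,7,6,0], [1,2,3,4,7], [0,4,7,2,5], [6,5,1,2,3,7], [5,1,7,3,0], [3,2,1,5,6,7], [2,1,5,4,7],
  [1,5,7,3,6], [6,5,4,3,2,7], [2,3,4,0,7], [0,4,7,6,3], [0,4,5,6,7,2], [6,5,7,2,4],
  [4,3,2,1,7,6], [3,4,5,1,7], [3,2,1,0,7,6], [1,0,4,3,7,6], [1,0,4,3,7], [0,1,5,6,7]]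

def clTwin : List (List ℕ) := [
  [8,4,5,6,7], [8,1,5,6,7], [3,4,5,8,7], [8,0,4,3,7], [8,3,4,5,7], [8,2,3,4,7], [8,0,1,2,7],
  [6,7,1,2,3,8], [6,5,4,8,2,7], [4,5,6,8,7], [1,2,3,8,7], [8,1,2,3,7], [6,8,1,2,3,7],
  [3,2,1,8,6,7], [8,4,5,1,7], [8,1,5,4,7], [7,5,8,3,6], [7,5,8,3,1], [7,5,8,2,6], [7,4,8,6,3],
  [7,4,8,6,0], [7,4,8,2,0], [7,3,8,6,4], [6,8,4,0,1,7], [6,5,1,8,3,7], [1,5,6,8,7]]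

def clY1 : List (List ℕ) := [
  [8,5,7,3,6], [8,4,7,6,0], [8,3,7,6,4], [8,6,7,3,5], [8,6,7,2,5], [8,1,7,6,2], [8,0,7,6,1],
  [8,5,7,3,1], [8,4,7,2,0]]

def clY2 : List (List ℕ) := [
  [6,7,8,9,4], [3,7,8,9,5], [6,7,8,9,3], [5,7,8,9,0], [0,7,8,9,6], [6,7,8,9,1]]

def clF : List (List ℕ) := [
  [6,5,9,7,3,8], [9,3,4,5,8], [8,4,9,6,7], [5,4,7,9,3], [8,3,9,5,7], [5,4,7,2,9], [5,1,2,9,8],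
  [0,4,7,9,3]]

def clSame : List (List ℕ) := [
  [6,5,7,9,8], [5,6,7,9,8], [3,4,7,9,8], [4,3,7,9,8], [4,0,7,9,8], [2,1,7,9,8], [1,2,7,9,8],
  [6,5,4,9,7,8], [1,5,7,9,8], [4,3,2,9,7,8], [1,2,3,9,7,8], [6,5,1,9,7,8], [5,4,9,2,7],
  [5,4,7,9,8], [3,2,7,9,8], [3,2,1,9,7,8], [2,3,7,9,8], [0,4,3,9,7,8], [3,4,5,9,7,8],
  [1,5,4,9,7,8], [6,5,9,0,7], [5,1,7,9,8], [2,1,9,6,7], [6,5,4,0,9,7], [4,5,7,9,8], [4,3,7,6,9],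
  [3,4,9,6,7]]

def clPair : List (List ℕ) := [
  [6,5,8,0,7], [6,5,7,0,8], [4,0,8,6,7], [4,0,7,6,8], [5,6,8,3,7], [5,6,8,2,7], [5,4,7,2,8],
  [5,1,7,3,8], [4,3,8,1,7], [4,3,7,1,8], [3,2,1,5,8,7], [3,2,1,5,7,8], [1,2,8,4,7], [1,2,7,4,8],
  [5,4,8,2,7], [5,1,8,3,7], [6,5,8,3,7], [6,5,8,2,7], [4,3,2,1,8,7], [4,3,2,1,7,8],
  [6,5,1,0,8,7], [6,5,1,0,7,8], [3,4,8,6,7], [3,4,7,6,8], [0,4,3,2,7,8], [0,1,2,3,7,8],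
  [6,5,4,3,8,7], [6,5,4,3,7,8], [5,6,7,0,8], [5,4,3,2,8,7], [5,4,3,2,7,8], [5,1,2,3,8,7],
  [5,1,2,3,7,8], [4,3,8,6,7], [4,3,7,6,8], [4,0,7,2,8], [3,2,8,7,5,6], [3,2,7,8,5,6],
  [2,3,8,7,5,6], [2,3,7,8,5,6], [2,1,8,4,7], [2,1,7,4,8], [2,1,0,4,7,8], [1,0,7,3,8],
  [0,4,3,2,8,7], [6,5,1,2,8,7], [6,5,1,2,7,8], [5,7,8,0,2], [4,0,8,2,7], [3,4,8,1,7],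
  [3,4,7,1,8], [3,2,8,5,7], [2,1,5,4,8,7], [1,0,8,3,7], [1,0,4,3,8,7], [0,4,5,6,8,7],
  [0,4,5,6,7,8], [0,1,5,6,8,7], [0,1,5,6,7,8]]

def clTri : List (List ℕ) := [
  [4,8,9,2,7], [4,7,9,2,8], [4,7,8,2,9], [3,8,9,1,7], [3,7,9,1,8], [2,7,8,4,9], [1,8,9,4,7],
  [1,7,9,4,8], [1,8,9,3,7], [1,7,9,3,8], [5,7,8,0,9], [3,7,8,1,9], [1,7,8,3,9], [0,7,8,5,9],
  [6,8,9,0,7], [6,7,9,0,8], [6,7,8,0,9], [2,8,9,4,7], [2,7,9,4,8], [0,7,9,5,8]]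

lemma ckA1 : ((List.range 32).all fun m =>
    [0, 31, 5, 9, 10, 18, 20].contains m || fires clA1 ([0, 1, 2, 4, 9] ++ [0] ++ [m ||| 2 ^ 5]))
    = true := by decide +kernel

lemma ckA2 : ((List.range 32).all fun m =>
    [0, 31].contains m || fires clA2 ([0, 1, 2, 4, 9] ++ [0] ++ [31 ||| 2 ^ 5] ++ [m]))
    = true := by decide +kernel

lemma ckT : ((List.range 128).all fun m => TL.contains m || fires clT (HM ++ [m])) = true := by
  decide +kernel

lemma ckTwin : ((List.range 7).all fun u => TL.all fun m =>
    !m.testBit u || Nat.beq (m ^^^ 2 ^ u) (nb u) ||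
      fires clTwin (HM ++ [nb u ||| 2 ^ u] ++ [m])) = true := by
  decide +kernel

lemma ckY1 : (TL.all fun m => [0, 127].contains m || fires clY1 (HM ++ [127] ++ [m])) = true := by
  decide +kernel

lemma ckY2 : (TL.all fun m => [0, 127].contains m ||
    fires clY2 (HM ++ [127] ++ [m ||| 2 ^ 7] ++ [0 ||| 2 ^ 8])) = true := by
  decide +kernel

lemma ckF : (TL.all fun m => Nat.beq m 30 ||
    fires clF (HM ++ [30] ++ [30] ++ [m ||| 2 ^ 7])) = true := by
  decide +kernel

lemma ckSame : (T3.all fun t => (30 :: T3).all fun m => Nat.beq m t ||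
    fires clSame (HM ++ [t] ++ [t ||| 2 ^ 7] ++ [m ||| 2 ^ 7])) = true := by
  decide +kernel

/-- Adjacent vertices with neighbourhoods `a`, `b` are impossible. -/
def pairBad (a b : ℕ) : Bool := fires clPair (HM ++ [a] ++ [b ||| 2 ^ 7])

lemma ckTri : (T3.all fun a => T3.all fun b => Nat.beq a b || pairBad a b ||
    T3.all fun d => Nat.beq a d || Nat.beq b d || pairBad a d || pairBad b d ||
      fires clTri (HM ++ [a] ++ [b ||| 2 ^ 7] ++ [d ||| 2 ^ 7 ||| 2 ^ 8])) = true := by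
  decide +kernel

lemma ckRest : (TL.all fun m => Nat.beq m 127 || ((30 :: T3).contains m ||
    (List.range 7).any fun u => Nat.beq m (nb u ||| 2 ^ u))) = true := by
  decide +kernel

lemma ckNb : ((List.range 7).all fun u => Nat.blt (nb u) (2 ^ 7) && (List.range 7).all fun i =>
    (nb u).testBit i == mAdj HM i u) = true := by
  decide +kernel

section local_facts

variable {G : SimpleGraph V} {p : ℕ → V}

lemma ty_mem (hP : P6Free G) (hB : BullFree G) (hH : Config G p HM) (v : V) :
    ty G p 7 v ∈ TL := by
  have h := List.all_eq_true.1 ckT _ (List.mem_range.2 (ty_desc G p 7 v).1)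
  rw [(hH.snoc rfl (ty_desc G p 7 v)).fires_false hP hB, Bool.or_false] at h
  simpa using h

lemma nb_desc (hH : Config G p HM) {u : ℕ} (hu : u < 7) : Desc G p 7 (p u) (nb u) := by
  have h := List.all_eq_true.1 ckNb u (List.mem_range.2 hu)
  rw [Bool.and_eq_true, Nat.blt_eq] at h
  refine ⟨h.1, fun i hi => ?_⟩
  have h2 := List.all_eq_true.1 h.2 i (List.mem_range.2 hi)
  rw [beq_iff_eq] at h2
  rw [h2, hH.mAdj hi hu]

lemma twin_local (hP : P6Free G) (hB : BullFree G) (hH : Config G p HM) {u : ℕ} (hu : u < 7)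
    {q w : V} (hq : Desc G p 7 q (nb u ||| 2 ^ u)) (hw : G.Adj (p u) w) (hqw : ¬ G.Adj q w) :
    ty G p 7 w ^^^ 2 ^ u = nb u := by
  have h := List.all_eq_true.1 (List.all_eq_true.1 ckTwin u (List.mem_range.2 hu)) _
    (ty_mem hP hB hH w)
  rw [((hH.snoc rfl hq).snoc rfl ((ty_desc G p 7 w).nadj hqw)).fires_false hP hB,
    Bool.or_false, ((ty_desc G p 7 w).2 u hu).2 hw] at h
  simpa using h

lemma Config.update (hH : Config G p HM) {u : ℕ} {a : V}
    (ha : ∀ i < 7, i ≠ u → (G.Adj (p i) a ↔ G.Adj (p i) (p u))) :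
    Config G (Function.update p u a) HM := by
  intro j hj i hij
  have hj7 : j < 7 := hj
  rw [hH j hj i hij]
  by_cases hju : j = u
  · subst hju
    rw [Function.update_self, Function.update_of_ne hij.ne, ha i (hij.trans hj7) hij.ne]
  · rw [Function.update_of_ne hju]
    by_cases hiu : i = u
    · subst hiu
      rw [Function.update_self, G.adj_comm a, ha j hj7 hju, G.adj_comm]
    · rw [Function.update_of_ne hiu]

/-- No vertex is an adjacent twin (within the configuration) of one of its vertices. -/
lemma no_twin (hP : P6Free G) (hB : BullFree G) (hPr : IsPrimeGraph G) (hH : Config G p HM)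
    {u : ℕ} (hu : u < 7) (v : V) : ty G p 7 v ≠ nb u ||| 2 ^ u := by
  intro hv
  obtain ⟨S, huS, hSR, hScl, hSmix⟩ := comp_exists G.Adj (fun a b h => h.symm)
    (fun a => ∀ i < 7, i ≠ u → (G.Adj (p i) a ↔ G.Adj (p i) (p u))) (p u)
    (fun _ _ _ => Iff.rfl)
  have hdv := ty_desc G p 7 v
  rw [hv] at hdv
  have huv : G.Adj (p u) v := (hdv.2 u hu).1 (by simp [Nat.testBit_or])
  have hvS : v ∈ S := by
    refine hScl _ huS v huv fun i hi hiu => ?_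
    rw [← hdv.2 i hi, ← (nb_desc hH hu).2 i hi]
    simp [Nat.testBit_or, Ne.symm hiu]
  have hk : ∃ k < 7, k ≠ u ∧ (nb u).testBit k = true := by
    clear hv hSR hScl hSmix huS hdv huv hvS
    revert u
    decide
  obtain ⟨k, hk7, hku, hk⟩ := hk
  have hkS : p k ∉ S := by
    intro h
    have := hSR _ h k hk7 hku
    rw [(nb_desc hH hu).2 k hk7] at hk
    exact G.loopless.irrefl _ (this.2 hk)
  obtain ⟨w, hwS, h1, h2⟩ := hPr.mixed S huS hvS huv.ne hkS
  obtain ⟨a, ha, b, hb, hab, hwa, hwb⟩ := hSmix (fun s => G.Adj w s) h1 h2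
  have hH' := hH.update (hSR a ha)
  have hq : Desc G (Function.update p u a) 7 b (nb u ||| 2 ^ u) := by
    refine ⟨Nat.or_lt_two_pow (nb_desc hH hu).1 (Nat.pow_lt_pow_right (by norm_num) hu), ?_⟩
    intro i hi
    rw [Nat.testBit_or, Nat.testBit_two_pow]
    by_cases hiu : i = u
    · subst hiu; simp [hab]
    · rw [Function.update_of_ne hiu, hSR b hb i hi hiu, ← (nb_desc hH hu).2 i hi]
      simp [Ne.symm hiu]
  have hloc := twin_local hP hB hH' hu hq (w := w)
    (by rw [Function.update_self]; exact hwa.symm) (fun h => hwb h.symm)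
  refine hwS (hScl a ha w hwa.symm fun i hi hiu => ?_)
  rw [← (nb_desc hH hu).2 i hi, ← hloc, Nat.testBit_xor, Nat.testBit_two_pow,
    (by simpa using Ne.symm hiu : decide (u = i) = false), Bool.xor_false,
    (ty_desc G (Function.update p u a) 7 w).2 i hi, Function.update_of_ne hiu]

lemma config_conn (hH : Config G p HM) : G.Adj (p 0) (p 1) ∧ G.Adj (p 1) (p 2) ∧
    G.Adj (p 2) (p 3) ∧ G.Adj (p 0) (p 4) ∧ G.Adj (p 1) (p 5) ∧ G.Adj (p 5) (p 6) := by
  refine ⟨?_, ?_, ?_, ?_, ?_, ?_⟩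
  · exact (hH 1 (by decide) 0 (by decide)).1 (by decide)
  · exact (hH 2 (by decide) 1 (by decide)).1 (by decide)
  · exact (hH 3 (by decide) 2 (by decide)).1 (by decide)
  · exact (hH 4 (by decide) 0 (by decide)).1 (by decide)
  · exact (hH 5 (by decide) 1 (by decide)).1 (by decide)
  · exact (hH 6 (by decide) 5 (by decide)).1 (by decide)

/-- No vertex is complete to the configuration. -/
lemma no_complete (hP : P6Free G) (hB : BullFree G) (hPr : IsPrimeGraph G) (hH : Config G p HM)
    (v : V) : ty G p 7 v ≠ 127 := by
  intro hv
  have d127 : ∀ y, ty G p 7 y = 127 → Desc G p 7 y 127 := fun y hy => hy ▸ ty_desc G p 7 y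
  have full : ∀ y, ty G p 7 y = 127 → ∀ i < 7, G.Adj (p i) y := by
    intro y hy i hi
    refine ((d127 y hy).2 i hi).1 ?_
    clear hy y
    revert i
    decide
  have hpY : ∀ i < 7, ty G p 7 (p i) ≠ 127 := fun i hi h =>
    G.loopless.irrefl _ (full _ h i hi)
  have hpR : ∀ i < 7, ty G p 7 (p i) ≠ 127 ∧ ∀ y, ty G p 7 y = 127 → G.Adj (p i) y :=
    fun i hi => ⟨hpY i hi, fun y hy => full y hy i hi⟩
  obtain ⟨S, huS, hSR, hScl, hSmix⟩ := comp_exists G.Adj (fun a b h => h.symm)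
    (fun a => ty G p 7 a ≠ 127 ∧ ∀ y, ty G p 7 y = 127 → G.Adj a y) (p 0) (hpR 0 (by norm_num))
  obtain ⟨e01, e12, e23, e04, e15, e56⟩ := config_conn hH
  have s1 := hScl _ huS _ e01 (hpR 1 (by norm_num))
  have s2 := hScl _ s1 _ e12 (hpR 2 (by norm_num))
  have s3 := hScl _ s2 _ e23 (hpR 3 (by norm_num))
  have s4 := hScl _ huS _ e04 (hpR 4 (by norm_num))
  have s5 := hScl _ s1 _ e15 (hpR 5 (by norm_num))
  have s6 := hScl _ s5 _ e56 (hpR 6 (by norm_num))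
  obtain ⟨w, hwS, h1, h2⟩ := hPr.mixed S huS s1 e01.ne (fun h => (hSR v h).1 hv)
  obtain ⟨a, ha, b, hb, hab, hwa, hwb⟩ := hSmix (fun s => G.Adj w s) h1 h2
  have hwY : ty G p 7 w ≠ 127 := fun h => hwb ((hSR b hb).2 w h).symm
  have hy : ∃ y, ty G p 7 y = 127 ∧ ¬ G.Adj y w := by
    by_contra hno
    push Not at hno
    exact hwS (hScl a ha w hwa.symm ⟨hwY, fun y hy => (hno y hy).symm⟩)
  obtain ⟨y, hy, hyw⟩ := hy
  have hw0 : ty G p 7 w = 0 := by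
    have h := List.all_eq_true.1 ckY1 _ (ty_mem hP hB hH w)
    rw [((hH.snoc rfl (d127 y hy)).snoc rfl ((ty_desc G p 7 w).nadj hyw)).fires_false hP hB,
      Bool.or_false] at h
    simpa [hwY] using h
  have ha0 : ty G p 7 a = 0 := by
    have h := List.all_eq_true.1 ckY2 _ (ty_mem hP hB hH a)
    have dw := ty_desc G p 7 w
    rw [hw0] at dw
    rw [(((hH.snoc rfl (d127 y hy)).snoc rfl
      ((ty_desc G p 7 a).adj ((hSR a ha).2 y hy).symm)).snoc rfl
      ((dw.nadj hyw).adj hwa.symm)).fires_false hP hB, Bool.or_false] at h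
    simpa [(hSR a ha).1] using h
  have hbn : ∃ i < 7, ¬ G.Adj (p i) b := by
    by_contra hno
    push Not at hno
    refine (hSR b hb).1 (Desc.ty_eq ⟨by norm_num, fun i hi => ?_⟩)
    simp only [hno i hi, iff_true]
    clear hno
    revert i
    decide
  obtain ⟨i, hi, hib⟩ := hbn
  have non : ∀ s, ty G p 7 s = 0 → ¬ G.Adj (p i) s := by
    intro s hs h
    have d := ty_desc G p 7 s
    rw [hs] at d
    simpa using (d.2 i hi).2 h
  exact hB.elim hwa ((hSR a ha).2 y hy) (full y hy i hi).symm hab ((hSR b hb).2 y hy).symm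
    (fun h => hyw h.symm) (fun h => non w hw0 h.symm) hwb (fun h => non a ha0 h.symm) hib

/-- The remaining neighbourhoods. -/
lemma ty_rest (hP : P6Free G) (hB : BullFree G) (hPr : IsPrimeGraph G) (hH : Config G p HM)
    (v : V) : ty G p 7 v ∈ 30 :: T3 := by
  have h := List.all_eq_true.1 ckRest _ (ty_mem hP hB hH v)
  rw [Bool.or_eq_true, Bool.or_eq_true] at h
  rcases h with h | h | h
  · exact absurd (Nat.eq_of_beq_eq_true h) (no_complete hP hB hPr hH v)
  · exact List.contains_iff_mem.1 h
  · obtain ⟨u, hu, h⟩ := List.any_eq_true.1 h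
    exact absurd (Nat.eq_of_beq_eq_true h) (no_twin hP hB hPr hH (List.mem_range.1 hu) v)

lemma config_types (hH : Config G p HM) : ty G p 7 (p 0) ≠ ty G p 7 (p 2) := by
  rw [(nb_desc hH (by norm_num : 0 < 7)).ty_eq, (nb_desc hH (by norm_num : 2 < 7)).ty_eq]
  decide

lemma exists_other (hH : Config G p HM) (t : ℕ) : ∃ v, ty G p 7 v ≠ t := by
  by_contra hno
  push Not at hno
  exact config_types hH ((hno _).trans (hno _).symm)

/-- The vertices whose neighbourhood is `30` form a clique. -/
lemma clique_F (hP : P6Free G) (hB : BullFree G) (hPr : IsPrimeGraph G) (hH : Config G p HM) :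
    G.IsClique {v | ty G p 7 v = 30} := by
  intro f hf f' hf' hne
  by_contra hnadj
  obtain ⟨S, huS, hSR, hScl, hSmix⟩ := comp_exists (fun a b => ¬ G.Adj a b ∧ a ≠ b)
    (fun a b h => ⟨fun h' => h.1 h'.symm, h.2.symm⟩) (fun a => ty G p 7 a = 30) f hf
  have hf'S := hScl f huS f' ⟨hnadj, hne⟩ hf'
  obtain ⟨c, hc⟩ := exists_other hH 30
  obtain ⟨w, hwS, h1, h2⟩ := hPr.mixed S huS hf'S hne (fun h => hc (hSR c h))
  obtain ⟨a, ha, b, hb, hab, hwa, hwb⟩ := hSmix (fun s => G.Adj w s) h1 h2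
  have da : Desc G p 7 a 30 := hSR a ha ▸ ty_desc G p 7 a
  have db : Desc G p 7 b 30 := hSR b hb ▸ ty_desc G p 7 b
  have h := List.all_eq_true.1 ckF _ (ty_mem hP hB hH w)
  rw [(((hH.snoc rfl da).snoc rfl (db.nadj hab.1)).snoc rfl
    (((ty_desc G p 7 w).adj hwa.symm).nadj (fun h => hwb h.symm))).fires_false hP hB,
    Bool.or_false] at h
  have hw := Nat.eq_of_beq_eq_true h
  refine hwS (hScl b hb w ⟨fun h => hwb h.symm, ?_⟩ hw)
  rintro rfl
  exact hwS hb

/-- Adjacent vertices outside the clique have different neighbourhoods in the configuration. -/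
lemma ty_ne (hP : P6Free G) (hB : BullFree G) (hPr : IsPrimeGraph G) (hH : Config G p HM)
    {a b : V} (hab : G.Adj a b) (ha : ty G p 7 a ∈ T3) : ty G p 7 a ≠ ty G p 7 b := by
  intro heq
  obtain ⟨S, haS, hSR, hScl, hSmix⟩ := comp_exists G.Adj (fun a b h => h.symm)
    (fun s => ty G p 7 s = ty G p 7 a) a rfl
  have hbS := hScl a haS b hab heq.symm
  obtain ⟨c, hc⟩ := exists_other hH (ty G p 7 a)
  obtain ⟨w, hwS, h1, h2⟩ := hPr.mixed S haS hbS hab.ne (fun h => hc (hSR c h))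
  obtain ⟨s, hs, t, ht, hst, hws, hwt⟩ := hSmix (fun s => G.Adj w s) h1 h2
  have ds : Desc G p 7 s (ty G p 7 a) := hSR s hs ▸ ty_desc G p 7 s
  have dt : Desc G p 7 t (ty G p 7 a) := hSR t ht ▸ ty_desc G p 7 t
  have h := List.all_eq_true.1 (List.all_eq_true.1 ckSame _ ha) _ (ty_rest hP hB hPr hH w)
  rw [(((hH.snoc rfl ds).snoc rfl (dt.adj hst)).snoc rfl
    (((ty_desc G p 7 w).adj hws.symm).nadj (fun h => hwt h.symm))).fires_false hP hB,
    Bool.or_false] at h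
  exact hwS (hScl s hs w hws.symm (Nat.eq_of_beq_eq_true h))

lemma pairBad_false (hP : P6Free G) (hB : BullFree G) (hH : Config G p HM) {a b : V}
    (hab : G.Adj a b) : pairBad (ty G p 7 a) (ty G p 7 b) = false :=
  ((hH.snoc rfl (ty_desc G p 7 a)).snoc rfl ((ty_desc G p 7 b).adj hab)).fires_false hP hB _

lemma no_triangle (hP : P6Free G) (hB : BullFree G) (hPr : IsPrimeGraph G) (hH : Config G p HM)
    {a b d : V} (ha : ty G p 7 a ∈ T3) (hb : ty G p 7 b ∈ T3) (hd : ty G p 7 d ∈ T3)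
    (hab : G.Adj a b) (had : G.Adj a d) (hbd : G.Adj b d) : False := by
  have beq : ∀ m n : ℕ, m ≠ n → Nat.beq m n = false := by
    intro m n h
    rw [Bool.eq_false_iff]
    exact fun h' => h (Nat.eq_of_beq_eq_true h')
  have h := List.all_eq_true.1 (List.all_eq_true.1 ckTri _ ha) _ hb
  rw [pairBad_false hP hB hH hab, beq _ _ (ty_ne hP hB hPr hH hab ha), Bool.false_or,
    Bool.false_or] at h
  have h := List.all_eq_true.1 h _ hd
  rw [pairBad_false hP hB hH had, pairBad_false hP hB hH hbd,
    beq _ _ (ty_ne hP hB hPr hH had ha), beq _ _ (ty_ne hP hB hPr hH hbd hb),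
    (((hH.snoc rfl (ty_desc G p 7 a)).snoc rfl ((ty_desc G p 7 b).adj hab)).snoc rfl
    (((ty_desc G p 7 d).adj had).adj hbd)).fires_false hP hB] at h
  exact absurd h (by simp)

end local_facts

/-! ### The 5-cycle -/

/-- The rotated 5-cycle, indexed by natural numbers. -/
def rot (c : Fin 5 → V) (k : ℕ) (i : ℕ) : V := c (Fin.ofNat 5 (k + i))

lemma rot_config {G : SimpleGraph V} {c : Fin 5 → V} (hc : IsInducedC5 G c) {k : ℕ} (hk : k < 5) :
    Config G (rot c k) [0, 1, 2, 4, 9] := by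
  intro j hj i hij
  unfold rot
  rw [hc.2]
  have hj5 : j < 5 := hj
  clear hj hc
  revert hij
  have hi5 : i < 5 ∨ 5 ≤ i := by omega
  rcases hi5 with hi5 | hi5
  · interval_cases k <;> interval_cases j <;> interval_cases i <;> decide
  · intro h; omega

/-- Some vertex anticomplete to the cycle has a neighbour that is mixed on the cycle. -/
lemma exists_attach {G : SimpleGraph V} (hP : P6Free G) (hB : BullFree G) (hPr : IsPrimeGraph G)
    {p : ℕ → V} (hC : Config G p [0, 1, 2, 4, 9]) (x : V) (hx : ty G p 5 x = 0) :
    ∃ x z, ty G p 5 x = 0 ∧ G.Adj x z ∧ ty G p 5 z ≠ 0 ∧ ty G p 5 z ≠ 31 := by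
  by_contra hno
  push Not at hno
  have non : ∀ s, ty G p 5 s = 0 → ∀ i < 5, ¬ G.Adj (p i) s := by
    intro s hs i hi h
    have d := ty_desc G p 5 s
    rw [hs] at d
    simpa using (d.2 i hi).2 h
  have full : ∀ y, ty G p 5 y = 31 → ∀ i < 5, G.Adj (p i) y := by
    intro y hy i hi
    have d := ty_desc G p 5 y
    rw [hy] at d
    refine (d.2 i hi).1 ?_
    clear d hy
    revert i
    decide
  have e01 : G.Adj (p 0) (p 1) := (hC 1 (by decide) 0 (by decide)).1 (by decide)
  have e12 : G.Adj (p 1) (p 2) := (hC 2 (by decide) 1 (by decide)).1 (by decide)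
  have n02 : ¬ G.Adj (p 0) (p 2) := fun h =>
    absurd ((hC 2 (by decide) 0 (by decide)).2 h) (by decide)
  have hR0 : ty G p 5 (p 0) ≠ 0 ∧
      (ty G p 5 (p 0) = 31 → ∀ x, ty G p 5 x = 0 → ¬ G.Adj x (p 0)) :=
    ⟨fun h => non _ h 1 (by norm_num) e01.symm,
      fun h => absurd (full _ h 0 (by norm_num)) (G.loopless.irrefl _)⟩
  have hR2 : ty G p 5 (p 2) ≠ 0 ∧
      (ty G p 5 (p 2) = 31 → ∀ x, ty G p 5 x = 0 → ¬ G.Adj x (p 2)) :=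
    ⟨fun h => non _ h 1 (by norm_num) e12,
      fun h => absurd (full _ h 2 (by norm_num)) (G.loopless.irrefl _)⟩
  have h02 : p 0 ≠ p 2 := by
    intro h
    have n03 : ¬ G.Adj (p 0) (p 3) := fun h =>
      absurd ((hC 3 (by decide) 0 (by decide)).2 h) (by decide)
    rw [h] at n03
    exact n03 ((hC 3 (by decide) 2 (by decide)).1 (by decide))
  obtain ⟨S, h0S, hSR, hScl, hSmix⟩ := comp_exists (fun a b => ¬ G.Adj a b ∧ a ≠ b)
    (fun a b h => ⟨fun h' => h.1 h'.symm, h.2.symm⟩)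
    (fun v => ty G p 5 v ≠ 0 ∧ (ty G p 5 v = 31 → ∀ x, ty G p 5 x = 0 → ¬ G.Adj x v)) (p 0) hR0
  have h2S := hScl _ h0S _ ⟨n02, h02⟩ hR2
  obtain ⟨w, hwS, h1, h2⟩ := hPr.mixed S h0S h2S h02 (fun h => (hSR x h).1 hx)
  obtain ⟨a, ha, b, hb, hab, hwa, hwb⟩ := hSmix (fun s => G.Adj w s) h1 h2
  -- members of `S` have no neighbour among the vertices anticomplete to the cycle
  have hSx : ∀ s ∈ S, ∀ x, ty G p 5 x = 0 → ¬ G.Adj x s := fun s hs x hx h =>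
    (hSR s hs).2 (hno x s hx h (hSR s hs).1) x hx h
  by_cases hw0 : ty G p 5 w = 0
  · exact hSx a ha w hw0 hwa
  by_cases hwR : ty G p 5 w = 31 → ∀ x, ty G p 5 x = 0 → ¬ G.Adj x w
  · refine hwS (hScl b hb w ⟨fun h => hwb h.symm, ?_⟩ ⟨hw0, hwR⟩)
    rintro rfl
    exact hwS hb
  push Not at hwR
  obtain ⟨hw, x', hx', hxw⟩ := hwR
  by_cases hb31 : ty G p 5 b = 31
  · obtain ⟨i, hi, hia⟩ : ∃ i < 5, G.Adj (p i) a := by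
      by_contra hn
      push Not at hn
      refine (hSR a ha).1 (Desc.ty_eq ⟨by norm_num, fun i hi => ?_⟩)
      simp [hn i hi]
    exact hB.elim hxw (full w hw i hi).symm (full b hb31 i hi) hwa hia
      (fun h => non x' hx' i hi h.symm) (hSx b hb x' hx') (hSx a ha x' hx') hwb
      (fun h => hab.1 h.symm)
  · have h := List.all_eq_true.1 ckA2 _ (List.mem_range.2 (ty_desc G p 5 b).1)
    have dx : Desc G p 5 x' 0 := hx' ▸ ty_desc G p 5 x'
    have dw : Desc G p 5 w 31 := hw ▸ ty_desc G p 5 w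
    rw [(((hC.snoc rfl dx).snoc rfl (dw.adj hxw)).snoc rfl
      (((ty_desc G p 5 b).nadj (hSx b hb x' hx')).nadj hwb)).fires_false hP hB,
      Bool.or_false] at h
    simp [hb31, (hSR b hb).1] at h

/-- The graph contains the configuration `HM`. -/
lemma exists_config {G : SimpleGraph V} (hP : P6Free G) (hB : BullFree G) (hPr : IsPrimeGraph G)
    (x : V) (c : Fin 5 → V) (hc : IsInducedC5 G c) (hx : ∀ i : Fin 5, ¬ G.Adj x (c i)) :
    ∃ p, Config G p HM := by
  have hC := rot_config hc (by norm_num : 0 < 5)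
  have hx0 : ty G (rot c 0) 5 x = 0 := by
    refine Desc.ty_eq ⟨by norm_num, fun i hi => ?_⟩
    have : ¬ G.Adj (rot c 0 i) x := fun h => hx _ h.symm
    simp [this]
  obtain ⟨x, z, hx, hxz, hz0, hz31⟩ := exists_attach hP hB hPr hC x hx0
  have dx := ty_desc G (rot c 0) 5 x
  rw [hx] at dx
  have dz := ty_desc G (rot c 0) 5 z
  have h := List.all_eq_true.1 ckA1 _ (List.mem_range.2 dz.1)
  rw [((hC.snoc rfl dx).snoc rfl (dz.adj hxz)).fires_false hP hB, Bool.or_false] at h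
  have hrot : ∀ k i, rot c k i = rot c 0 ((k + i) % 5) := by
    intro k i
    unfold rot
    congr 1
    apply Fin.ext
    simp [Fin.ofNat]
  have hk : ∃ k < 5, ∀ i < 5, (18).testBit i =
      (ty G (rot c 0) 5 z).testBit ((k + i) % 5) := by
    have hmem := List.contains_iff_mem.1 h
    generalize ty G (rot c 0) 5 z = m at hmem hz0 hz31
    clear h
    fin_cases hmem
    · exact absurd rfl hz0
    · exact absurd rfl hz31
    · exact ⟨1, by decide⟩
    · exact ⟨4, by decide⟩
    · exact ⟨2, by decide⟩
    · exact ⟨0, by decide⟩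
    · exact ⟨3, by decide⟩
  obtain ⟨k, hk5, hk⟩ := hk
  have dz' : Desc G (rot c k) 5 z 18 := by
    refine ⟨by norm_num, fun i hi => ?_⟩
    rw [hk i hi, hrot k i]
    exact dz.2 _ (Nat.mod_lt _ (by norm_num))
  have dx' : Desc G (rot c k) 5 x 0 := by
    refine ⟨by norm_num, fun i hi => ?_⟩
    rw [hrot k i, ← dx.2 _ (Nat.mod_lt _ (by norm_num))]
    simp
  exact ⟨_, ((rot_config hc hk5).snoc rfl dz').snoc rfl (dx'.adj hxz.symm)⟩

theorem stmt13 (G : SimpleGraph V)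
    (hP : P6Free G) (hB : BullFree G) (hPr : IsPrimeGraph G)
    (x : V) (c : Fin 5 → V) (hc : IsInducedC5 G c)
    (hx : ∀ i : Fin 5, ¬ G.Adj x (c i) ∧ c i ≠ x) :
    ∃ F : Set V, G.IsClique F ∧
      ¬ ∃ a b e : V, a ∉ F ∧ b ∉ F ∧ e ∉ F ∧ G.Adj a b ∧ G.Adj a e ∧ G.Adj b e := by
  obtain ⟨p, hH⟩ := exists_config hP hB hPr x c hc fun i => (hx i).1
  refine ⟨{v | ty G p 7 v = 30}, clique_F hP hB hPr hH, ?_⟩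
  rintro ⟨a, b, d, ha, hb, hd, hab, had, hbd⟩
  have key : ∀ v, v ∉ {v | ty G p 7 v = 30} → ty G p 7 v ∈ T3 := by
    intro v hv
    rcases List.mem_cons.1 (ty_rest hP hB hPr hH v) with h | h
    · exact absurd h hv
    · exact h
  exact no_triangle hP hB hPr hH (key a ha) (key b hb) (key d hd) hab had hbd
end
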